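/- Let v be a harmonic function on the open unit ball B ⊂ ℝⁿ, not identically zero, and set Z = Z(v). Then for every point y₀ ∈ B_{1/2} ∖ Z there exists a constant C₁ = C₁(y₀, Z) > 0 such that for every harmonic function u on B with Z(u) = Z one has sup_{x ∈ B_{1/2}} |u(x)| ≤ C₁ · |u(y₀)|. -/

import Mathlib

open Metric Set Filter

noncomputable section

abbrev En (n : ℕ) : Type := EuclideanSpace ℝ (Fin n)

/-- The Laplacian of `u` at `x`, computed from the second iterated Fréchet derivative. -/
def laplacianAt {n : ℕ} (u : En n → ℝ) (x : En n) : ℝ :=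
  ∑ i : Fin n, iteratedFDeriv ℝ 2 u x ![EuclideanSpace.single i 1, EuclideanSpace.single i 1]

/-- `u` is harmonic on `Ω`: twice continuously differentiable with vanishing Laplacian. -/
def HarmonicOnSet {n : ℕ} (u : En n → ℝ) (Ω : Set (En n)) : Prop :=
  ContDiffOn ℝ 2 u Ω ∧ ∀ x ∈ Ω, laplacianAt u x = 0

/-- The zero set of `u` within `Ω`. -/
def zeroSet {n : ℕ} (u : En n → ℝ) (Ω : Set (En n)) : Set (En n) :=
  {x ∈ Ω | u x = 0}

/-- The collection of nodal domains of `u` in `Ω`, i.e. the connected components of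
`Ω \ Z(u)`. -/
def nodalComponents {n : ℕ} (u : En n → ℝ) (Ω : Set (En n)) : Set (Set (En n)) :=
  {C | ∃ x ∈ Ω \ zeroSet u Ω, C = connectedComponentIn (Ω \ zeroSet u Ω) x}


open MeasureTheory
open scoped Topology

/-- The radial weight `(1 - ‖x‖²)₊`. -/
def capWeight {n : ℕ} (x : En n) : ℝ := max (1 - ‖x‖ ^ 2) 0

lemma continuous_capWeight {n : ℕ} : Continuous (capWeight (n := n)) := by
  unfold capWeight; fun_prop

lemma capWeight_nonneg {n : ℕ} (x : En n) : 0 ≤ capWeight x := le_max_right _ _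

lemma capWeight_le_one {n : ℕ} (x : En n) : capWeight x ≤ 1 :=
  max_le (by nlinarith [sq_nonneg ‖x‖]) zero_le_one

lemma capWeight_eq_zero {n : ℕ} {x : En n} (hx : 1 ≤ ‖x‖) : capWeight x = 0 :=
  max_eq_right (by nlinarith)

lemma capWeight_eq_zero_of_notMem {n : ℕ} {x : En n} (hx : x ∉ closedBall (0 : En n) 1) :
    capWeight x = 0 :=
  capWeight_eq_zero (by simpa using (not_le.1 (by simpa using hx)).le)

lemma hasDerivAt_max_zero_sq (t : ℝ) : HasDerivAt (fun s : ℝ => max s 0 ^ 2) (2 * max t 0) t := by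
  rcases lt_trichotomy t 0 with h | h | h
  · rw [max_eq_right h.le, mul_zero]
    refine (hasDerivAt_const t (0 : ℝ)).congr_of_eventuallyEq ?_
    filter_upwards [Iio_mem_nhds h] with s hs
    simp [max_eq_right (le_of_lt (mem_Iio.1 hs))]
  · subst h
    simp only [max_self, mul_zero]
    rw [hasDerivAt_iff_isLittleO_nhds_zero]
    simp only [zero_add, max_self, smul_zero, sub_zero]
    refine Asymptotics.IsBigO.trans_isLittleO (g := fun h : ℝ => h ^ 2) ?_ ?_
    · refine Asymptotics.IsBigO.of_bound 1 (Eventually.of_forall fun s => ?_)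
      rcases le_total s 0 with hs | hs
      · simp [max_eq_right hs, sq_nonneg]
      · simp [max_eq_left hs]
    · simpa using Asymptotics.isLittleO_pow_pow (𝕜 := ℝ) (m := 1) (n := 2) (by norm_num)
  · rw [max_eq_left h.le]
    have : HasDerivAt (fun s : ℝ => s ^ 2) (2 * t) t := by simpa using hasDerivAt_pow 2 t
    refine this.congr_of_eventuallyEq ?_
    filter_upwards [Ioi_mem_nhds h] with s hs
    simp [max_eq_left (le_of_lt (mem_Ioi.1 hs))]

lemma hasFDerivAt_capWeight_sq {n : ℕ} (x : En n) :
    HasFDerivAt (fun y : En n => capWeight y ^ 2) ((-4 * capWeight x) • innerSL ℝ x) x := by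
  have h1 : HasFDerivAt (fun y : En n => 1 - ‖y‖ ^ 2) (-((2 : ℝ) • innerSL ℝ x)) x := by
    refine ((hasStrictFDerivAt_norm_sq x).hasFDerivAt.const_sub 1).congr_fderiv ?_
    ext y
    simp [two_smul]
  have h2 := (hasDerivAt_max_zero_sq (1 - ‖x‖ ^ 2)).comp_hasFDerivAt x h1
  refine h2.congr_fderiv ?_
  ext y
  simp [capWeight]
  ring

lemma contDiff_capWeight_sq {n : ℕ} : ContDiff ℝ 1 (fun y : En n => capWeight y ^ 2) := by
  rw [contDiff_one_iff_fderiv]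
  refine ⟨fun x => (hasFDerivAt_capWeight_sq x).differentiableAt, ?_⟩
  have : fderiv ℝ (fun y : En n => capWeight y ^ 2)
      = fun x => (-4 * capWeight x) • innerSL ℝ x :=
    funext fun x => (hasFDerivAt_capWeight_sq x).fderiv
  rw [this]
  have := continuous_capWeight (n := n)
  fun_prop

lemma hasFDerivAt_indicator {E : Type*} [NormedAddCommGroup E] [NormedSpace ℝ E] {A : Set E}
    {K : E → ℝ} {K' : E → E →L[ℝ] ℝ} {x : E} (hK : HasFDerivAt K (K' x) x)
    (h : (K x = 0 ∧ K' x = 0) ∨ (∀ᶠ y in 𝓝 x, y ∈ A) ∨ (∀ᶠ y in 𝓝 x, y ∉ A)) :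
    HasFDerivAt (A.indicator K) (A.indicator K' x) x := by
  rcases h with ⟨h0, h1⟩ | h | h
  · have hz : A.indicator K' x = 0 := by
      by_cases hx : x ∈ A <;> simp [hx, h1]
    rw [hz]
    rw [h1] at hK
    rw [hasFDerivAt_iff_isLittleO] at hK ⊢
    refine Asymptotics.IsBigO.trans_isLittleO ?_ hK
    refine Asymptotics.IsBigO.of_bound 1 (Eventually.of_forall fun y => ?_)
    by_cases hx : x ∈ A <;> by_cases hy : y ∈ A <;> simp [hx, hy, h0]
  · rw [Set.indicator_of_mem h.self_of_nhds]
    exact hK.congr_of_eventuallyEq (h.mono fun y hy => Set.indicator_of_mem hy _)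
  · rw [Set.indicator_of_notMem h.self_of_nhds]
    exact (hasFDerivAt_const (0 : ℝ) x).congr_of_eventuallyEq
      (h.mono fun y hy => Set.indicator_of_notMem hy _)

lemma integral_indicator_fderiv_eq_zero {n : ℕ} {A : Set (En n)} (hA : MeasurableSet A)
    {k : En n → ℝ} (hk : ContDiff ℝ 1 k)
    (h : ∀ x ∈ closedBall (0 : En n) 1, (k x = 0 ∧ fderiv ℝ k x = 0) ∨
      (∀ᶠ y in 𝓝 x, y ∈ A) ∨ (∀ᶠ y in 𝓝 x, y ∉ A)) (e : En n) :
    Integrable (A.indicator fun x => fderiv ℝ (fun y => capWeight y ^ 2 * k y) x e) ∧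
    ∫ x, A.indicator (fun x => fderiv ℝ (fun y => capWeight y ^ 2 * k y) x e) x = 0 := by
  set K : En n → ℝ := fun y => capWeight y ^ 2 * k y with hKdef
  have hK : ContDiff ℝ 1 K := contDiff_capWeight_sq.mul hk
  have hsupp : HasCompactSupport K := by
    refine HasCompactSupport.intro (isCompact_closedBall (0 : En n) 1) fun x hx => ?_
    simp [hKdef, capWeight_eq_zero_of_notMem hx]
  have hdK : ∀ x, HasFDerivAt K (fderiv ℝ K x) x := fun x =>
    (hK.differentiable one_ne_zero x).hasFDerivAt
  have hK0 : ∀ x ∉ closedBall (0 : En n) 1, K x = 0 ∧ fderiv ℝ K x = 0 := by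
    intro x hx
    have hev : K =ᶠ[𝓝 x] fun _ => 0 := by
      filter_upwards [isClosed_closedBall.isOpen_compl.mem_nhds hx] with y hy
      simp [hKdef, capWeight_eq_zero_of_notMem hy]
    exact ⟨hev.self_of_nhds, by rw [hev.fderiv_eq]; simp⟩
  have hind : ∀ x, HasFDerivAt (A.indicator K) (A.indicator (fderiv ℝ K) x) x := by
    intro x
    refine hasFDerivAt_indicator (hdK x) ?_
    by_cases hx : x ∈ closedBall (0 : En n) 1
    · refine (h x hx).imp_left fun ⟨h0, h1⟩ => ⟨by simp [hKdef, h0], ?_⟩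
      have := (hasFDerivAt_capWeight_sq x).mul (hk.differentiable one_ne_zero x).hasFDerivAt
      rw [h0, h1] at this
      simpa using (show HasFDerivAt K _ x from this).fderiv
    · exact Or.inl (hK0 x hx)
  have hcd : Continuous fun x => fderiv ℝ K x e :=
    (hK.continuous_fderiv one_ne_zero).clm_apply continuous_const
  have hi1 : Integrable (fun x => fderiv ℝ K x e) :=
    hcd.integrable_of_hasCompactSupport (hsupp.fderiv_apply ℝ e)
  have hi0 : Integrable K := hK.continuous.integrable_of_hasCompactSupport hsupp
  have hi1' := hi1.indicator hA
  have hi0' := hi0.indicator hA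
  refine ⟨hi1', ?_⟩
  have heq : ∀ x, A.indicator (fun x => fderiv ℝ K x e) x = A.indicator (fderiv ℝ K) x e := by
    intro x; by_cases hx : x ∈ A <;> simp [hx]
  have := integral_bilinear_hasFDerivAt_right_eq_neg_left_of_integrable (μ := volume)
    (f := fun _ : En n => (1 : ℝ)) (f' := fun _ => 0) (g := A.indicator K)
    (g' := fun x => A.indicator (fderiv ℝ K) x) (v := e) (B := ContinuousLinearMap.mul ℝ ℝ)
    (by simp) (by simpa [← heq] using hi1') (by simpa using hi0')
    (fun x _ => hasFDerivAt_const _ _) (fun x _ => hind x)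
  simpa [← heq] using this

/-- The `i`-th partial derivative. -/
def partialDeriv {n : ℕ} (i : Fin n) (u : En n → ℝ) (x : En n) : ℝ :=
  fderiv ℝ u x (EuclideanSpace.single i 1)

lemma fderiv_apply_eq_sum {n : ℕ} (u : En n → ℝ) (x y : En n) :
    fderiv ℝ u x y = ∑ i, y i * partialDeriv i u x := by
  have hy : y = ∑ i, y i • (EuclideanSpace.single i (1 : ℝ) : En n) := by
    ext j
    simp [Finset.sum_apply, Pi.single_apply]
  conv_lhs => rw [hy]
  simp [map_sum, partialDeriv]

lemma ContDiff.partialDeriv {n : ℕ} {u : En n → ℝ} (hu : ContDiff ℝ 2 u) (i : Fin n) :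
    ContDiff ℝ 1 (partialDeriv i u) :=
  (hu.fderiv_right (m := 1) (by norm_num)).clm_apply contDiff_const

lemma laplacianAt_eq_sum_partialDeriv {n : ℕ} {u : En n → ℝ} (hu : ContDiff ℝ 2 u) (x : En n) :
    laplacianAt u x = ∑ i, partialDeriv i (partialDeriv i u) x := by
  refine Finset.sum_congr rfl fun i _ => ?_
  rw [iteratedFDeriv_two_apply]
  have hd : DifferentiableAt ℝ (fderiv ℝ u) x :=
    (hu.fderiv_right (m := 1) (by norm_num)).differentiable one_ne_zero x
  have := (hd.hasFDerivAt.clm_apply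
    (hasFDerivAt_const (EuclideanSpace.single i (1 : ℝ) : En n) x)).fderiv
  unfold _root_.partialDeriv
  rw [this]
  simp

/-- Green's identity on the unit ball, for a weight that is radial, and for the restriction of
the harmonic function `u` to a set `A` whose boundary consists of singular zeros of `u`. -/
lemma integral_indicator_green {n : ℕ} {A : Set (En n)} (hA : MeasurableSet A)
    {u v : En n → ℝ} (hu : ContDiff ℝ 2 u) (hv : ContDiff ℝ 2 v)
    (hu0 : ∀ x ∈ ball (0 : En n) 1, laplacianAt u x = 0)
    (hv0 : ∀ x ∈ ball (0 : En n) 1, laplacianAt v x = 0)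
    (h : ∀ x ∈ closedBall (0 : En n) 1, (u x = 0 ∧ fderiv ℝ u x = 0) ∨
      (∀ᶠ y in 𝓝 x, y ∈ A) ∨ (∀ᶠ y in 𝓝 x, y ∉ A)) :
    ∫ x, A.indicator
      (fun x => capWeight x * (v x * fderiv ℝ u x x - u x * fderiv ℝ v x x)) x = 0 := by
  set D : Fin n → En n → ℝ := fun i => partialDeriv i u with hD
  set q : En n → ℝ := fun x => u x ^ 2 + ∑ i, D i x ^ 2 with hq
  set g : Fin n → En n → ℝ := fun i x => v x * D i x - u x * partialDeriv i v x with hg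
  set w : En n → ℝ := fun x => v x * fderiv ℝ u x x - u x * fderiv ℝ v x x with hw
  have hDc : ∀ i, ContDiff ℝ 1 (D i) := fun i => hu.partialDeriv i
  have hu1 : ContDiff ℝ 1 u := hu.of_le (by norm_num)
  have hv1 : ContDiff ℝ 1 v := hv.of_le (by norm_num)
  have hqc : ContDiff ℝ 1 q := (hu1.pow 2).add (ContDiff.sum fun i _ => (hDc i).pow 2)
  have hgc : ∀ i, ContDiff ℝ 1 (g i) := fun i =>
    (hv1.mul (hDc i)).sub (hu1.mul (hv.partialDeriv i))
  have hq0 : ∀ x, 0 ≤ q x := fun x => by simp only [hq]; positivity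
  have hwsum : ∀ x, w x = ∑ i, x i * g i x := by
    intro x
    simp only [hw, hg, fderiv_apply_eq_sum, Finset.mul_sum, ← Finset.sum_sub_distrib]
    exact Finset.sum_congr rfl fun i _ => by simp only [hD]; ring
  have huq : ∀ x, |u x| ≤ √(q x) := fun x => Real.abs_le_sqrt
    (le_add_of_nonneg_right (Finset.sum_nonneg fun i _ => sq_nonneg _))
  have hDq : ∀ i x, |D i x| ≤ √(q x) := fun i x => Real.abs_le_sqrt
    ((Finset.single_le_sum (f := fun i => D i x ^ 2) (fun i _ => sq_nonneg _)
      (Finset.mem_univ i)).trans (le_add_of_nonneg_left (sq_nonneg _)))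
  have hdq : ∀ i x, partialDeriv i q x
      = 2 * u x * D i x + ∑ j, 2 * D j x * partialDeriv i (D j) x := by
    intro i x
    have h1 : HasFDerivAt (fun x => u x ^ 2) ((2 * u x) • fderiv ℝ u x) x := by
      simpa using (hu1.differentiable one_ne_zero x).hasFDerivAt.pow 2
    have h2 : ∀ j, HasFDerivAt (fun x => D j x ^ 2) ((2 * D j x) • fderiv ℝ (D j) x) x := by
      intro j
      simpa using ((hDc j).differentiable one_ne_zero x).hasFDerivAt.pow 2
    have h3 := (h1.add (HasFDerivAt.fun_sum (u := Finset.univ) fun j _ => h2 j)).fderiv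
    change fderiv ℝ q x = _ at h3
    simp only [_root_.partialDeriv, h3]
    simp [hD, _root_.partialDeriv]
  have hp : ∃ C : ℝ, 0 ≤ C ∧ ∀ x ∈ closedBall (0 : En n) 1,
      |∑ i, partialDeriv i q x * g i x| ≤ C * q x := by
    set m : En n → ℝ := fun x => ∑ i, (2 * |D i x| + ∑ j, 2 * |partialDeriv i (D j) x|) *
      (|v x| + |partialDeriv i v x|) with hm
    have hmc : Continuous m := by
      have h1 : ∀ i j, Continuous (partialDeriv i (D j)) := fun i j =>
        ((hDc j).continuous_fderiv one_ne_zero).clm_apply continuous_const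
      have h2 : ∀ i, Continuous (D i) := fun i => (hDc i).continuous
      have h3 : ∀ i, Continuous (partialDeriv i v) := fun i => (hv.partialDeriv i).continuous
      have h4 := hv1.continuous
      simp only [hm]
      fun_prop
    obtain ⟨C, hC⟩ := (isCompact_closedBall (0 : En n) 1).exists_bound_of_continuousOn
      hmc.continuousOn
    refine ⟨|C|, abs_nonneg _, fun x hx => ?_⟩
    have hmle : m x ≤ |C| := (le_abs_self _).trans ((hC x hx).trans (le_abs_self _))
    refine le_trans ?_ (mul_le_mul_of_nonneg_right hmle (hq0 x))
    refine (Finset.abs_sum_le_sum_abs _ _).trans ?_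
    simp only [hm, Finset.sum_mul]
    refine Finset.sum_le_sum fun i _ => ?_
    have hs : √(q x) * √(q x) = q x := Real.mul_self_sqrt (hq0 x)
    have e1 : |partialDeriv i q x| ≤
        √(q x) * (2 * |D i x| + ∑ j, 2 * |partialDeriv i (D j) x|) := by
      rw [hdq, mul_add, Finset.mul_sum]
      refine (abs_add_le _ _).trans (add_le_add ?_ ((Finset.abs_sum_le_sum_abs _ _).trans
        (Finset.sum_le_sum fun j _ => ?_)))
      · rw [abs_mul, abs_mul, abs_two]
        nlinarith [huq x, abs_nonneg (D i x)]
      · rw [abs_mul, abs_mul, abs_two]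
        nlinarith [hDq j x, abs_nonneg (partialDeriv i (D j) x)]
    have e2 : |g i x| ≤ √(q x) * (|v x| + |partialDeriv i v x|) := by
      refine (abs_sub _ _).trans ?_
      rw [abs_mul, abs_mul]
      nlinarith [huq x, hDq i x, abs_nonneg (v x), abs_nonneg (partialDeriv i v x)]
    rw [abs_mul]
    calc _ ≤ _ := mul_le_mul e1 e2 (abs_nonneg _) (by positivity)
      _ = √(q x) * √(q x) * ((2 * |D i x| + ∑ j, 2 * |partialDeriv i (D j) x|) *
        (|v x| + |partialDeriv i v x|)) := by ring
      _ = _ := by rw [hs]; ring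
  obtain ⟨C, hC0, hC⟩ := hp
  set P : En n → ℝ := fun x => ∑ i, partialDeriv i q x * g i x with hP
  -- the regularized divergence
  set T : ℝ → En n → ℝ := fun ε x => -4 * capWeight x * (q x / (q x + ε)) * w x
    + capWeight x ^ 2 * (ε / (q x + ε) ^ 2) * P x with hT
  have hdivg : ∀ x ∈ ball (0 : En n) 1, ∑ i, partialDeriv i (g i) x = 0 := by
    intro x hx
    have e : ∀ i, partialDeriv i (g i) x
        = v x * partialDeriv i (D i) x - u x * partialDeriv i (partialDeriv i v) x := by
      intro i
      have h1 := (((hv1.differentiable one_ne_zero x).hasFDerivAt.mul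
        ((hDc i).differentiable one_ne_zero x).hasFDerivAt).sub
        ((hu1.differentiable one_ne_zero x).hasFDerivAt.mul
        ((hv.partialDeriv i).differentiable one_ne_zero x).hasFDerivAt)).fderiv
      change fderiv ℝ (g i) x = _ at h1
      simp only [_root_.partialDeriv, h1]
      simp [hD, _root_.partialDeriv]
      ring
    have a1 := hu0 x hx
    have a2 := hv0 x hx
    rw [laplacianAt_eq_sum_partialDeriv hu] at a1
    rw [laplacianAt_eq_sum_partialDeriv hv] at a2
    simp only [e, Finset.sum_sub_distrib, ← Finset.mul_sum, hD, a1, a2]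
    ring
  have hTint : ∀ ε : ℝ, 0 < ε → Integrable (A.indicator (T ε)) ∧
      ∫ x, A.indicator (T ε) x = 0 := by
    intro ε hε
    have hpos : ∀ x, q x + ε ≠ 0 := fun x => (add_pos_of_nonneg_of_pos (hq0 x) hε).ne'
    set k : Fin n → En n → ℝ := fun i x => q x / (q x + ε) * g i x with hk
    have hχ : ContDiff ℝ 1 (fun x => q x / (q x + ε)) :=
      hqc.div (hqc.add contDiff_const) hpos
    have hkc : ∀ i, ContDiff ℝ 1 (k i) := fun i => hχ.mul (hgc i)
    have hdχ : ∀ x, HasFDerivAt (fun x => q x / (q x + ε))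
        ((ε / (q x + ε) ^ 2) • fderiv ℝ q x) x := by
      intro x
      have hqd := (hqc.differentiable one_ne_zero x).hasFDerivAt
      have h1 : HasDerivAt (fun t : ℝ => t / (t + ε)) (ε / (q x + ε) ^ 2) (q x) := by
        have := (hasDerivAt_id (q x)).div ((hasDerivAt_id (q x)).add_const ε) (hpos x)
        refine this.congr_deriv ?_
        simp
      exact h1.comp_hasFDerivAt x hqd
    have hdk : ∀ i x, HasFDerivAt (k i) ((q x / (q x + ε)) • fderiv ℝ (g i) x
        + g i x • ((ε / (q x + ε) ^ 2) • fderiv ℝ q x)) x := fun i x =>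
      (hdχ x).mul ((hgc i).differentiable one_ne_zero x).hasFDerivAt
    have hki := fun i => integral_indicator_fderiv_eq_zero hA (hkc i) (by
      intro x hx
      refine (h x hx).imp_left fun ⟨h0, h1⟩ => ?_
      have hq' : q x = 0 := by simp [hq, hD, _root_.partialDeriv, h0, h1]
      have hg' : g i x = 0 := by simp [hg, hD, _root_.partialDeriv, h0, h1]
      refine ⟨by simp [hk, hg'], ?_⟩
      rw [(hdk i x).fderiv, hq', hg']
      simp) (EuclideanSpace.single i (1 : ℝ))
    have hTeq : A.indicator (T ε) = fun x => ∑ i, A.indicator (fun x => fderiv ℝ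
        (fun y => capWeight y ^ 2 * k i y) x (EuclideanSpace.single i (1 : ℝ))) x := by
      funext x
      by_cases hxA : x ∈ A
      swap
      · simp [hxA]
      simp only [Set.indicator_of_mem hxA]
      have e : ∀ i, fderiv ℝ (fun y => capWeight y ^ 2 * k i y) x
          (EuclideanSpace.single i (1 : ℝ)) =
          -4 * capWeight x * (q x / (q x + ε)) * (x i * g i x)
          + capWeight x ^ 2 * (ε / (q x + ε) ^ 2) * (partialDeriv i q x * g i x)
          + capWeight x ^ 2 * (q x / (q x + ε)) * partialDeriv i (g i) x := by
        intro i
        have := ((hasFDerivAt_capWeight_sq x).mul (hdk i x)).fderiv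
        change fderiv ℝ (fun y => capWeight y ^ 2 * k i y) x = _ at this
        rw [this]
        simp [hk, _root_.partialDeriv, EuclideanSpace.inner_single_right]
        ring
      simp only [e, Finset.sum_add_distrib, ← Finset.mul_sum, hT, hP, hwsum]
      by_cases hx : x ∈ ball (0 : En n) 1
      · rw [hdivg x hx]; ring
      · rw [capWeight_eq_zero (by simpa using hx)]; ring
    refine ⟨?_, ?_⟩
    · rw [hTeq]
      exact integrable_finsetSum _ fun i _ => (hki i).1
    · rw [hTeq, integral_finsetSum _ fun i _ => (hki i).1]
      exact Finset.sum_eq_zero fun i _ => (hki i).2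
  have hwc : Continuous w := by
    have h1 := hu1.continuous_fderiv one_ne_zero
    have h2 := hv1.continuous_fderiv one_ne_zero
    have h3 := hu1.continuous
    have h4 := hv1.continuous
    simp only [hw]
    fun_prop
  have hlim : Tendsto (fun m : ℕ => ∫ x, A.indicator (T (1 / ((m : ℝ) + 1))) x) atTop
      (𝓝 (∫ x, A.indicator (fun x => -4 * capWeight x * w x) x)) := by
    refine tendsto_integral_of_dominated_convergence
      ((closedBall (0 : En n) 1).indicator fun x => 4 * |w x| + C)
      (fun m => (hTint _ (by positivity)).1.aestronglyMeasurable) ?_ ?_ ?_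
    · rw [integrable_indicator_iff isClosed_closedBall.measurableSet]
      exact ContinuousOn.integrableOn_compact (isCompact_closedBall _ _)
        (by fun_prop)
    · intro m
      refine Eventually.of_forall fun x => ?_
      set ε : ℝ := 1 / ((m : ℝ) + 1) with hε
      have hε0 : 0 < ε := by positivity
      by_cases hx : x ∈ closedBall (0 : En n) 1
      swap
      · rw [Set.indicator_of_notMem hx]
        by_cases hxA : x ∈ A <;> simp [hxA, hT, capWeight_eq_zero_of_notMem hx]
      rw [Set.indicator_of_mem hx]
      have hnn : 0 ≤ 4 * |w x| + C := by positivity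
      by_cases hxA : x ∈ A
      swap
      · simpa [hxA] using hnn
      rw [Set.indicator_of_mem hxA, Real.norm_eq_abs]
      have hs : 0 < q x + ε := add_pos_of_nonneg_of_pos (hq0 x) hε0
      have c0 := capWeight_nonneg x
      have c1 := capWeight_le_one x
      have r1 : q x / (q x + ε) ≤ 1 := (div_le_one hs).2 (by linarith)
      have r0 : 0 ≤ q x / (q x + ε) := div_nonneg (hq0 x) hs.le
      refine (abs_add_le _ _).trans (add_le_add ?_ ?_)
      · rw [abs_mul, abs_mul, abs_mul, abs_of_nonneg c0, abs_of_nonneg r0]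
        refine mul_le_mul_of_nonneg_right ?_ (abs_nonneg _)
        norm_num
        nlinarith
      · rw [abs_mul, abs_mul, abs_of_nonneg (sq_nonneg _),
          abs_of_nonneg (show 0 ≤ ε / (q x + ε) ^ 2 by positivity)]
        have hPx := hC x hx
        have r2 : ε / (q x + ε) ^ 2 * |P x| ≤ C := by
          rw [div_mul_eq_mul_div, div_le_iff₀ (by positivity)]
          have := mul_le_mul_of_nonneg_left hPx hε0.le
          nlinarith [mul_nonneg hC0 (sq_nonneg (q x)), mul_nonneg hC0 (sq_nonneg ε),
            mul_nonneg (mul_nonneg hC0 (hq0 x)) hε0.le]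
        have r3 : 0 ≤ ε / (q x + ε) ^ 2 * |P x| := by positivity
        have c2 : capWeight x ^ 2 ≤ 1 := by nlinarith
        rw [mul_assoc]
        nlinarith
    · refine Eventually.of_forall fun x => ?_
      by_cases hxA : x ∈ A
      swap
      · simp [hxA]
      simp only [Set.indicator_of_mem hxA]
      rcases (hq0 x).eq_or_lt with hqx | hqx
      · have hsq : √(q x) = 0 := by rw [← hqx]; simp
        have h1 : u x = 0 := abs_nonpos_iff.1 (hsq ▸ huq x)
        have h2 : ∀ i, D i x = 0 := fun i => abs_nonpos_iff.1 (hsq ▸ hDq i x)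
        have h3 : ∀ i, g i x = 0 := fun i => by simp [hg, h1, h2 i]
        simp [hT, hwsum, hP, h3]
      · have hε : Tendsto (fun m : ℕ => 1 / ((m : ℝ) + 1)) atTop (𝓝 0) :=
          tendsto_one_div_add_atTop_nhds_zero_nat
        have hcont : ContinuousAt (fun ε : ℝ => T ε x) 0 := by
          simp only [hT]
          have : q x + 0 ≠ 0 := by simpa using hqx.ne'
          have h2 : (q x + 0) ^ 2 ≠ 0 := pow_ne_zero _ this
          fun_prop (disch := assumption)
        have := hcont.tendsto.comp hε
        have h0 : T 0 x = -4 * capWeight x * w x := by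
          simp [hT, div_self hqx.ne']
        rw [h0] at this
        exact this
  have hzero : ∫ x, A.indicator (fun x => -4 * capWeight x * w x) x = 0 := by
    refine tendsto_nhds_unique hlim ?_
    have : ∀ m : ℕ, ∫ x, A.indicator (T (1 / ((m : ℝ) + 1))) x = 0 := fun m =>
      (hTint _ (by positivity)).2
    simp only [this]
    exact tendsto_const_nhds
  have hfin : ∀ x, A.indicator (fun x => -4 * capWeight x * w x) x
      = -4 * A.indicator (fun x => capWeight x * w x) x := by
    intro x
    by_cases hxA : x ∈ A <;> simp [hxA, mul_assoc]
  simp only [hfin, integral_const_mul] at hzero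
  linarith

/-- Near every point of `Ω` that is not a singular zero of `u`, the set `A` is either everything
or nothing. -/
def SplitsOffSingular {n : ℕ} (u : En n → ℝ) (Ω A : Set (En n)) : Prop :=
  ∀ x ∈ Ω, (u x = 0 ∧ fderiv ℝ u x = 0) ∨ (∀ᶠ y in 𝓝 x, y ∈ A) ∨ (∀ᶠ y in 𝓝 x, y ∉ A)

lemma hasFDerivAt_comp_homothety {n : ℕ} {u : En n → ℝ} (c : En n) (t : ℝ) (x : En n)
    (hu : DifferentiableAt ℝ u (c + t • x)) :
    HasFDerivAt (fun y => u (c + t • y)) (t • fderiv ℝ u (c + t • x)) x := by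
  have h1 : HasFDerivAt (fun y : En n => c + t • y) (t • ContinuousLinearMap.id ℝ (En n)) x :=
    ((hasFDerivAt_id x).const_smul t).const_add c
  refine (hu.hasFDerivAt.comp x h1).congr_fderiv ?_
  ext y
  simp

lemma partialDeriv_comp_homothety {n : ℕ} {u : En n → ℝ} (hu : Differentiable ℝ u) (c : En n)
    (t : ℝ) (i : Fin n) (x : En n) :
    partialDeriv i (fun y => u (c + t • y)) x = t * partialDeriv i u (c + t • x) := by
  rw [partialDeriv, (hasFDerivAt_comp_homothety c t x (hu _)).fderiv]
  simp [partialDeriv]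

lemma contDiff_comp_homothety {n : ℕ} {u : En n → ℝ} {k : WithTop ℕ∞} (hu : ContDiff ℝ k u)
    (c : En n) (t : ℝ) : ContDiff ℝ k (fun y => u (c + t • y)) :=
  hu.comp (contDiff_const.add (contDiff_id.const_smul t))

lemma laplacianAt_comp_homothety {n : ℕ} {u : En n → ℝ} (hu : ContDiff ℝ 2 u) (c : En n)
    (t : ℝ) (x : En n) :
    laplacianAt (fun y => u (c + t • y)) x = t ^ 2 * laplacianAt u (c + t • x) := by
  rw [laplacianAt_eq_sum_partialDeriv hu,
    laplacianAt_eq_sum_partialDeriv (contDiff_comp_homothety hu c t), Finset.mul_sum]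
  refine Finset.sum_congr rfl fun i _ => ?_
  have hfun : partialDeriv i (fun y => u (c + t • y))
      = fun y => t * partialDeriv i u (c + t • y) :=
    funext fun y => partialDeriv_comp_homothety (hu.differentiable two_ne_zero) c t i y
  have hd := (hu.partialDeriv i).differentiable one_ne_zero
  have h1 := ((hasFDerivAt_comp_homothety c t x (hd _)).const_mul t).fderiv
  rw [hfun, partialDeriv, h1]
  simp [partialDeriv]
  ring

lemma add_smul_mem_ball {n : ℕ} {c x : En n} {t R : ℝ} (ht0 : 0 ≤ t) (ht : t < R)
    (hx : x ∈ closedBall (0 : En n) 1) : c + t • x ∈ ball c R := by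
  rw [mem_closedBall_zero_iff] at hx
  rw [mem_ball_iff_norm, add_sub_cancel_left, norm_smul, Real.norm_eq_abs, abs_of_nonneg ht0]
  nlinarith

/-- For harmonic functions the weighted pairing `∫ u (c + r x) v (c + s x)` depends only on
`r s`: version for globally smooth functions. -/
lemma integral_pairing_eq_of_contDiff {n : ℕ} {A : Set (En n)} (hA : MeasurableSet A)
    {u v : En n → ℝ} (hu : ContDiff ℝ 2 u) (hv : ContDiff ℝ 2 v) {c : En n} {R : ℝ}
    (hu0 : ∀ x ∈ ball c R, laplacianAt u x = 0) (hv0 : ∀ x ∈ ball c R, laplacianAt v x = 0)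
    (h : SplitsOffSingular u (ball c R) A)
    {r s r' s' : ℝ} (hr : r ∈ Ioo 0 R) (hs : s ∈ Ioo 0 R) (hr' : r' ∈ Ioo 0 R)
    (hs' : s' ∈ Ioo 0 R) (hrs : r * s = r' * s') :
    ∫ x, capWeight x * (A.indicator u (c + r • x) * v (c + s • x))
      = ∫ x, capWeight x * (A.indicator u (c + r' • x) * v (c + s' • x)) := by
  set p := r * s with hp
  have hp0 : 0 < p := mul_pos hr.1 hs.1
  have hR : 0 < R := hr.1.trans hr.2
  set Φ : ℝ → ℝ := fun t => ∫ x, capWeight x * (A.indicator u (c + t • x) * v (c + (p / t) • x))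
    with hΦ
  set J : Set ℝ := Ioo (p / R) R with hJ
  have hJpos : ∀ t ∈ J, 0 < t := fun t ht => (div_pos hp0 hR).trans ht.1
  have hJ2 : ∀ t ∈ J, p / t < R := fun t ht => by
    have := ht.1
    rw [div_lt_iff₀ hR] at this
    rw [div_lt_iff₀ (hJpos t ht)]
    linarith
  have hud := hu.differentiable two_ne_zero
  have hvd := hv.differentiable two_ne_zero
  have hu1 := hu.continuous_fderiv two_ne_zero
  have hv1 := hv.continuous_fderiv two_ne_zero
  have huc := hu.continuous
  have hvc := hv.continuous
  have hcc := continuous_capWeight (n := n)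
  obtain ⟨M, hM0, hM⟩ : ∃ M : ℝ, 0 ≤ M ∧ ∀ y ∈ closedBall c R,
      |u y| ≤ M ∧ |v y| ≤ M ∧ ‖fderiv ℝ u y‖ ≤ M ∧ ‖fderiv ℝ v y‖ ≤ M := by
    obtain ⟨M, hM⟩ := (isCompact_closedBall c R).exists_bound_of_continuousOn
      (f := fun y => |u y| + |v y| + ‖fderiv ℝ u y‖ + ‖fderiv ℝ v y‖)
      (by fun_prop)
    refine ⟨|M|, abs_nonneg _, fun y hy => ?_⟩
    have h1 := (le_abs_self _).trans ((hM y hy).trans (le_abs_self _))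
    have h2 := abs_nonneg (u y)
    have h3 := abs_nonneg (v y)
    have h4 := norm_nonneg (fderiv ℝ u y)
    have h5 := norm_nonneg (fderiv ℝ v y)
    refine ⟨?_, ?_, ?_, ?_⟩ <;> linarith
  have hmem : ∀ t ∈ J, ∀ x ∈ closedBall (0 : En n) 1,
      c + t • x ∈ ball c R ∧ c + (p / t) • x ∈ ball c R := fun t ht x hx =>
    ⟨add_smul_mem_ball (hJpos t ht).le ht.2 hx,
      add_smul_mem_ball (div_pos hp0 (hJpos t ht)).le (hJ2 t ht) hx⟩
  have hderiv : ∀ t ∈ J, HasDerivAt Φ 0 t := by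
    intro t₀ ht₀
    set F' : ℝ → En n → ℝ := fun t x => {x | c + t • x ∈ A}.indicator (fun x => capWeight x *
      (fderiv ℝ u (c + t • x) x * v (c + (p / t) • x)
        - (p / t ^ 2) * (u (c + t • x) * fderiv ℝ v (c + (p / t) • x) x))) x with hF'
    have hAt : ∀ t : ℝ, MeasurableSet {x | c + t • x ∈ A} := fun t =>
      hA.preimage (by fun_prop : Continuous fun x : En n => c + t • x).measurable
    have hFm : ∀ t : ℝ, AEStronglyMeasurable (fun x => capWeight x *
        (A.indicator u (c + t • x) * v (c + (p / t) • x))) volume := by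
      intro t
      have h1 : Measurable fun x => A.indicator u (c + t • x) :=
        (huc.measurable.indicator hA).comp
          (by fun_prop : Continuous fun x : En n => c + t • x).measurable
      have h2 : Measurable fun x => v (c + (p / t) • x) :=
        (by fun_prop : Continuous fun x => v (c + (p / t) • x)).measurable
      exact (hcc.measurable.mul (h1.mul h2)).aestronglyMeasurable
    have hbi : ∀ K : ℝ, Integrable ((closedBall (0 : En n) 1).indicator fun _ => K) := by
      intro K
      rw [integrable_indicator_iff isClosed_closedBall.measurableSet]
      exact continuousOn_const.integrableOn_compact (isCompact_closedBall _ _)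
    have hind : ∀ y ∈ ball c R, |A.indicator u y| ≤ M := by
      intro y hy
      by_cases hyA : y ∈ A
      · simpa [hyA] using (hM y (ball_subset_closedBall hy)).1
      · simpa [hyA] using hM0
    have key := hasDerivAt_integral_of_dominated_loc_of_deriv_le (μ := (volume : Measure (En n)))
      (F := fun t x => capWeight x * (A.indicator u (c + t • x) * v (c + (p / t) • x)))
      (F' := F') (x₀ := t₀) (s := J)
      (bound := (closedBall (0 : En n) 1).indicator fun _ => M * M + R ^ 2 / p * (M * M))
      (isOpen_Ioo.mem_nhds ht₀) (Eventually.of_forall hFm) ?_ ?_ ?_ (hbi _) ?_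
    · have hzero : ∫ x, F' t₀ x = 0 := by
        have ht₀' := hJpos t₀ ht₀
        have hg := integral_indicator_green (hAt t₀) (contDiff_comp_homothety hu c t₀)
          (contDiff_comp_homothety hv c (p / t₀))
          (fun x hx => by
            rw [laplacianAt_comp_homothety hu,
              hu0 _ (hmem t₀ ht₀ x (ball_subset_closedBall hx)).1, mul_zero])
          (fun x hx => by
            rw [laplacianAt_comp_homothety hv,
              hv0 _ (hmem t₀ ht₀ x (ball_subset_closedBall hx)).2, mul_zero])
          (fun x hx => by
            have hcont : ContinuousAt (fun x : En n => c + t₀ • x) x := by fun_prop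
            refine (h _ (hmem t₀ ht₀ x hx).1).imp (fun ⟨h0, h1⟩ => ⟨h0, ?_⟩)
              (Or.imp (fun h => hcont.eventually h) (fun h => hcont.eventually h))
            rw [(hasFDerivAt_comp_homothety c t₀ x (hud _)).fderiv, h1, smul_zero])
        rw [← mul_right_inj' ht₀'.ne', mul_zero, ← integral_const_mul, ← hg]
        refine integral_congr_ae (Eventually.of_forall fun x => ?_)
        by_cases hxA : c + t₀ • x ∈ A
        · simp only [hF', Set.indicator_of_mem (show x ∈ {x | c + t₀ • x ∈ A} from hxA)]
          rw [(hasFDerivAt_comp_homothety c t₀ x (hud _)).fderiv,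
            (hasFDerivAt_comp_homothety c (p / t₀) x (hvd _)).fderiv]
          simp only [smul_apply, smul_eq_mul]
          field_simp
        · simp only [hF', Set.indicator_of_notMem (show x ∉ {x | c + t₀ • x ∈ A} from hxA),
            mul_zero]
      have := key.2
      rwa [hzero] at this
    · refine Integrable.mono' (hbi (M * M)) (hFm t₀) (Eventually.of_forall fun x => ?_)
      by_cases hx : x ∈ closedBall (0 : En n) 1
      · rw [Set.indicator_of_mem hx, Real.norm_eq_abs, abs_mul, abs_mul,
          abs_of_nonneg (capWeight_nonneg x)]
        have h1 := hind _ (hmem t₀ ht₀ x hx).1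
        have h2 := (hM _ (ball_subset_closedBall (hmem t₀ ht₀ x hx).2)).2.1
        have h3 := mul_le_mul h1 h2 (abs_nonneg _) hM0
        exact (mul_le_of_le_one_left (by positivity) (capWeight_le_one x)).trans h3
      · simp [hx, capWeight_eq_zero_of_notMem hx]
    · refine (Measurable.indicator ?_ (hAt t₀)).aestronglyMeasurable
      have hc : Continuous fun x => capWeight x *
          (fderiv ℝ u (c + t₀ • x) x * v (c + (p / t₀) • x)
            - (p / t₀ ^ 2) * (u (c + t₀ • x) * fderiv ℝ v (c + (p / t₀) • x) x)) := by
        have e1 : Continuous fun x => fderiv ℝ u (c + t₀ • x) x :=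
          (hu1.comp (by fun_prop)).clm_apply continuous_id
        have e2 : Continuous fun x => fderiv ℝ v (c + (p / t₀) • x) x :=
          (hv1.comp (by fun_prop)).clm_apply continuous_id
        fun_prop
      exact hc.measurable
    · refine Eventually.of_forall fun x t ht => ?_
      have ht0 := hJpos t ht
      have hK : 0 ≤ M * M + R ^ 2 / p * (M * M) := by positivity
      by_cases hx : x ∈ closedBall (0 : En n) 1
      swap
      · by_cases hxA : c + t • x ∈ A <;> simp [hF', hxA, hx, capWeight_eq_zero_of_notMem hx]
      rw [Set.indicator_of_mem hx]
      by_cases hxA : c + t • x ∈ A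
      swap
      · simpa [hF', hxA] using hK
      simp only [hF', Set.indicator_of_mem (show x ∈ {x | c + t • x ∈ A} from hxA)]
      rw [Real.norm_eq_abs, abs_mul, abs_of_nonneg (capWeight_nonneg x)]
      refine (mul_le_of_le_one_left (abs_nonneg _) (capWeight_le_one x)).trans ?_
      have hx1 : ‖x‖ ≤ 1 := by simpa using hx
      obtain ⟨a1, -, a3, -⟩ := hM _ (ball_subset_closedBall (hmem t ht x hx).1)
      obtain ⟨-, b2, -, b4⟩ := hM _ (ball_subset_closedBall (hmem t ht x hx).2)
      have d1 : |fderiv ℝ u (c + t • x) x| ≤ M := by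
        refine ((fderiv ℝ u (c + t • x)).le_opNorm x).trans ?_
        nlinarith [norm_nonneg x]
      have d2 : |fderiv ℝ v (c + (p / t) • x) x| ≤ M := by
        refine ((fderiv ℝ v (c + (p / t) • x)).le_opNorm x).trans ?_
        nlinarith [norm_nonneg x]
      refine (abs_sub _ _).trans (add_le_add ?_ ?_)
      · rw [abs_mul]
        exact mul_le_mul d1 b2 (abs_nonneg _) hM0
      · rw [abs_mul, abs_mul]
        refine mul_le_mul ?_ (mul_le_mul a1 d2 (abs_nonneg _) hM0) (by positivity) (by positivity)
        rw [abs_of_pos (by positivity), div_le_div_iff₀ (by positivity) hp0]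
        have := ht.1
        rw [div_lt_iff₀ hR] at this
        nlinarith
    · refine Eventually.of_forall fun x t ht => ?_
      have ht0 := hJpos t ht
      by_cases hx : x ∈ closedBall (0 : En n) 1
      swap
      · have : F' t x = 0 := by
          by_cases hxA : c + t • x ∈ A <;> simp [hF', hxA, capWeight_eq_zero_of_notMem hx]
        rw [this]
        simp only [capWeight_eq_zero_of_notMem hx, zero_mul]
        exact hasDerivAt_const _ _
      have e1 : HasDerivAt (fun t : ℝ => c + t • x) x t := by
        simpa using ((hasDerivAt_id t).smul_const x).const_add c
      have e2 : HasDerivAt (fun t : ℝ => p / t) (-(p / t ^ 2)) t := by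
        have := (hasDerivAt_inv ht0.ne').const_mul p
        refine (this.congr_deriv ?_)
        field_simp
      have e3 : HasDerivAt (fun t : ℝ => c + (p / t) • x) ((-(p / t ^ 2)) • x) t :=
        (e2.smul_const x).const_add c
      have f1 := (hasFDerivAt_indicator (A := A) (hud (c + t • x)).hasFDerivAt
        (h _ (hmem t ht x hx).1)).comp_hasDerivAt t e1
      have f2 := (hvd (c + (p / t) • x)).hasFDerivAt.comp_hasDerivAt t e3
      refine ((f1.mul f2).const_mul (capWeight x)).congr_deriv ?_
      by_cases hxA : c + t • x ∈ A
      · simp [hF', hxA]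
        left
        ring
      · simp [hF', hxA]
  have hmemJ : ∀ a b : ℝ, a ∈ Ioo 0 R → b ∈ Ioo 0 R → a * b = p → a ∈ J ∧ p / a = b := by
    intro a b ha hb hab
    refine ⟨⟨?_, ha.2⟩, ?_⟩
    · rw [div_lt_iff₀ hR, ← hab]
      exact mul_lt_mul_of_pos_left hb.2 ha.1
    · rw [← hab, mul_div_cancel_left₀ _ ha.1.ne']
  have h1 := hmemJ r s hr hs rfl
  have h2 := hmemJ r' s' hr' hs' hrs.symm
  have hconst : Φ r = Φ r' := isOpen_Ioo.is_const_of_deriv_eq_zero isPreconnected_Ioo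
    (fun t ht => (hderiv t ht).differentiableAt.differentiableWithinAt)
    (fun t ht => (hderiv t ht).deriv) h1.1 h2.1
  simpa only [hΦ, h1.2, h2.2] using hconst

lemma ContDiffOn.exists_contDiff_eqOn_ball {n : ℕ} {u : En n → ℝ} {c : En n} {R R' : ℝ}
    (hu : ContDiffOn ℝ 2 u (ball c R)) (hR' : 0 < R') (hRR' : R' < R) :
    ∃ w : En n → ℝ, ContDiff ℝ 2 w ∧ EqOn w u (ball c R') := by
  let f : ContDiffBump c := ⟨R', (R' + R) / 2, hR', by linarith⟩
  refine ⟨fun x => f x * u x, ?_, fun x hx => ?_⟩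
  · rw [contDiff_iff_contDiffAt]
    intro x
    by_cases hx : x ∈ ball c R
    · exact f.contDiffAt.mul ((hu x hx).contDiffAt (isOpen_ball.mem_nhds hx))
    · have hxs : x ∉ closedBall c ((R' + R) / 2) := by
        simp only [mem_ball, mem_closedBall, not_lt, not_le] at hx ⊢
        linarith
      refine (contDiffAt_const (c := (0 : ℝ))).congr_of_eventuallyEq ?_
      filter_upwards [isClosed_closedBall.isOpen_compl.mem_nhds hxs] with y hy
      have : f y = 0 := by
        refine f.zero_of_le_dist ?_
        simpa using (not_le.1 (by simpa using hy)).le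
      simp [this]
  · have : f x = 1 := f.one_of_mem_closedBall (ball_subset_closedBall hx)
    simp [this]

lemma HarmonicOnSet.mono {n : ℕ} {u : En n → ℝ} {Ω Ω' : Set (En n)} (hu : HarmonicOnSet u Ω)
    (h : Ω' ⊆ Ω) : HarmonicOnSet u Ω' :=
  ⟨hu.1.mono h, fun x hx => hu.2 x (h hx)⟩

lemma HarmonicOnSet.exists_contDiff {n : ℕ} {u : En n → ℝ} {c : En n} {R R' : ℝ}
    (hu : HarmonicOnSet u (ball c R)) (hR' : 0 < R') (hRR' : R' < R) :
    ∃ w : En n → ℝ, ContDiff ℝ 2 w ∧ EqOn w u (ball c R') ∧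
      ∀ x ∈ ball c R', laplacianAt w x = 0 := by
  obtain ⟨w, hw, hwu⟩ := hu.1.exists_contDiff_eqOn_ball hR' hRR'
  refine ⟨w, hw, hwu, fun x hx => ?_⟩
  have hev : w =ᶠ[𝓝 x] u := hwu.eventuallyEq_of_mem (isOpen_ball.mem_nhds hx)
  rw [laplacianAt, (hev.iteratedFDeriv ℝ 2).self_of_nhds]
  exact hu.2 x (ball_subset_ball hRR'.le hx)

/-- For functions harmonic on `ball c R`, the weighted pairing `∫ u (c + r x) v (c + s x)` depends
only on `r s`, even after restricting `u` to a set splitting off its singular zeros. -/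
lemma HarmonicOnSet.integral_pairing_eq {n : ℕ} {A : Set (En n)} (hA : MeasurableSet A)
    {u v : En n → ℝ} {c : En n} {R : ℝ} (hu : HarmonicOnSet u (ball c R))
    (hv : HarmonicOnSet v (ball c R)) (h : SplitsOffSingular u (ball c R) A)
    {r s r' s' : ℝ} (hr : r ∈ Ioo 0 R) (hs : s ∈ Ioo 0 R) (hr' : r' ∈ Ioo 0 R)
    (hs' : s' ∈ Ioo 0 R) (hrs : r * s = r' * s') :
    ∫ x, capWeight x * (A.indicator u (c + r • x) * v (c + s • x))
      = ∫ x, capWeight x * (A.indicator u (c + r' • x) * v (c + s' • x)) := by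
  obtain ⟨R', hR'1, hR'R⟩ := exists_between
    (max_lt (max_lt hr.2 hs.2) (max_lt hr'.2 hs'.2))
  simp only [max_lt_iff] at hR'1
  obtain ⟨⟨h1, h2⟩, h3, h4⟩ := hR'1
  obtain ⟨w, hw, hwu, hw0⟩ := hu.exists_contDiff (hr.1.trans h1) hR'R
  obtain ⟨z, hz, hzv, hz0⟩ := hv.exists_contDiff (hr.1.trans h1) hR'R
  have key := integral_pairing_eq_of_contDiff hA hw hz hw0 hz0 (fun x hx => by
    have hev : w =ᶠ[𝓝 x] u := hwu.eventuallyEq_of_mem (isOpen_ball.mem_nhds hx)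
    rw [hev.fderiv_eq, hev.self_of_nhds]
    exact h x (ball_subset_ball hR'R.le hx)) ⟨hr.1, h1⟩ ⟨hs.1, h2⟩ ⟨hr'.1, h3⟩ ⟨hs'.1, h4⟩ hrs
  have hcongr : ∀ a b : ℝ, 0 < a → a < R' → 0 < b → b < R' → ∀ x : En n,
      capWeight x * (A.indicator w (c + a • x) * z (c + b • x))
        = capWeight x * (A.indicator u (c + a • x) * v (c + b • x)) := by
    intro a b ha ha' hb hb' x
    by_cases hx : x ∈ closedBall (0 : En n) 1
    · rw [hzv (add_smul_mem_ball hb.le hb' hx)]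
      by_cases hxA : c + a • x ∈ A
      · simp [hxA, hwu (add_smul_mem_ball ha.le ha' hx)]
      · simp [hxA]
    · simp [capWeight_eq_zero_of_notMem hx]
  simpa only [hcongr r s hr.1 h1 hs.1 h2, hcongr r' s' hr'.1 h3 hs'.1 h4] using key

lemma hasCompactSupport_capWeight {n : ℕ} : HasCompactSupport (capWeight (n := n)) :=
  HasCompactSupport.intro (isCompact_closedBall 0 1) fun _ => capWeight_eq_zero_of_notMem

lemma integrable_capWeight {n : ℕ} : Integrable (capWeight (n := n)) :=
  continuous_capWeight.integrable_of_hasCompactSupport hasCompactSupport_capWeight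

lemma integral_capWeight_pos {n : ℕ} : 0 < ∫ x : En n, capWeight x :=
  continuous_capWeight.integral_pos_of_hasCompactSupport_nonneg_nonzero hasCompactSupport_capWeight
    capWeight_nonneg (x := 0) (by simp [capWeight])

lemma integrable_capWeight_mul {n : ℕ} {f : En n → ℝ} (hf : ContinuousOn f (closedBall 0 1)) :
    Integrable fun x => capWeight x * f x := by
  have h : (fun x => capWeight x * f x)
      = (closedBall (0 : En n) 1).indicator fun x => capWeight x * f x := by
    refine (Set.indicator_eq_self.2 fun x hx => ?_).symm
    by_contra h
    exact hx (by simp [capWeight_eq_zero_of_notMem h])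
  rw [h, integrable_indicator_iff isClosed_closedBall.measurableSet]
  exact (continuous_capWeight.continuousOn.mul hf).integrableOn_compact (isCompact_closedBall _ _)

lemma capWeight_pos {n : ℕ} {x : En n} (hx : x ∈ ball (0 : En n) 1) : 0 < capWeight x := by
  rw [mem_ball_zero_iff] at hx
  exact lt_max_of_lt_left (by nlinarith [norm_nonneg x])

lemma eq_zero_of_integral_capWeight_mul_eq_zero {n : ℕ} {f : En n → ℝ}
    (hf : ContinuousOn f (closedBall 0 1)) (hpos : ∀ x ∈ closedBall (0 : En n) 1, 0 ≤ f x)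
    (h : ∫ x, capWeight x * f x = 0) : ∀ x ∈ ball (0 : En n) 1, f x = 0 := by
  have hnn : ∀ x, 0 ≤ capWeight x * f x := by
    intro x
    by_cases hx : x ∈ closedBall (0 : En n) 1
    · exact mul_nonneg (capWeight_nonneg x) (hpos x hx)
    · simp [capWeight_eq_zero_of_notMem hx]
  rw [integral_eq_zero_iff_of_nonneg hnn (integrable_capWeight_mul hf)] at h
  have h2 := Measure.eqOn_open_of_ae_eq (ae_restrict_of_ae (s := ball (0 : En n) 1) h) isOpen_ball
    ((continuous_capWeight.continuousOn.mul hf).mono ball_subset_closedBall) continuousOn_const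
  intro x hx
  exact (mul_eq_zero.1 (h2 hx)).resolve_left (capWeight_pos hx).ne'

lemma ContinuousOn.comp_homothety {n : ℕ} {f : En n → ℝ} {c : En n} {R t : ℝ}
    (hf : ContinuousOn f (ball c R)) (ht0 : 0 ≤ t) (ht : t < R) :
    ContinuousOn (fun x => f (c + t • x)) (closedBall 0 1) :=
  hf.comp (by fun_prop) fun _ hx => add_smul_mem_ball ht0 ht hx

lemma splitsOffSingular_univ {n : ℕ} (u : En n → ℝ) (Ω : Set (En n)) :
    SplitsOffSingular u Ω univ := fun _ _ => Or.inr (Or.inl (Eventually.of_forall mem_univ))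

lemma harmonicOnSet_const {n : ℕ} (a : ℝ) (Ω : Set (En n)) : HarmonicOnSet (fun _ => a) Ω :=
  ⟨contDiffOn_const, fun x _ => by simp [laplacianAt, iteratedFDeriv_const_of_ne]⟩

lemma HarmonicOnSet.neg {n : ℕ} {u : En n → ℝ} {Ω : Set (En n)} (hu : HarmonicOnSet u Ω) :
    HarmonicOnSet (fun x => -u x) Ω :=
  ⟨hu.1.neg, fun x hx => by
    have := hu.2 x hx
    simp only [laplacianAt] at this ⊢
    have h2 : iteratedFDeriv ℝ 2 (fun x => -u x) x = -iteratedFDeriv ℝ 2 u x :=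
      iteratedFDeriv_neg_apply
    simp [h2, this]⟩

lemma HarmonicOnSet.integral_capWeight_mul {n : ℕ} {u : En n → ℝ} {c : En n} {R r : ℝ}
    (hu : HarmonicOnSet u (ball c R)) (hr : r ∈ Ioo 0 R) :
    ∫ x, capWeight x * u (c + r • x) = u c * ∫ x : En n, capWeight x := by
  have hR : 0 < R := hr.1.trans hr.2
  set f : ℝ → ℝ := fun t => ∫ x, capWeight x * u (c + t • x) with hf
  have hconst : ∀ t ∈ Ioo 0 R, f t = f r := by
    intro t ht
    have ht1 := ht.1
    have ht2 := ht.2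
    have hr1 := hr.1
    have hr2 := hr.2
    have := hu.integral_pairing_eq MeasurableSet.univ (harmonicOnSet_const 1 _)
      (splitsOffSingular_univ u _) (r := t) (s := r / 2) (r' := r) (s' := t / 2) ht
      ⟨by linarith, by linarith⟩ hr ⟨by linarith, by linarith⟩ (by ring)
    simpa [hf] using this
  obtain ⟨M, hM⟩ := (isCompact_closedBall c (R / 2)).exists_bound_of_continuousOn
    (hu.1.continuousOn.mono (closedBall_subset_ball (half_lt_self hR)))
  have hnear : ∀ᶠ t : ℝ in 𝓝[>] 0, t ∈ Ioo 0 (R / 2) := Ioo_mem_nhdsGT (half_pos hR)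
  have hlim : Tendsto f (𝓝[>] 0) (𝓝 (∫ x : En n, capWeight x * u c)) := by
    refine tendsto_integral_filter_of_dominated_convergence
      (fun x => capWeight x * M) ?_ ?_ (integrable_capWeight.mul_const M) ?_
    · filter_upwards [hnear] with t ht
      exact (integrable_capWeight_mul (hu.1.continuousOn.comp_homothety ht.1.le
        (ht.2.trans (half_lt_self hR)))).aestronglyMeasurable
    · filter_upwards [hnear] with t ht
      refine Eventually.of_forall fun x => ?_
      by_cases hx : x ∈ closedBall (0 : En n) 1
      · rw [norm_mul, Real.norm_of_nonneg (capWeight_nonneg x)]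
        exact mul_le_mul_of_nonneg_left
          (hM _ (ball_subset_closedBall (add_smul_mem_ball ht.1.le ht.2 hx))) (capWeight_nonneg x)
      · simp [capWeight_eq_zero_of_notMem hx]
    · refine Eventually.of_forall fun x => Tendsto.const_mul _ ?_
      have h1 : ContinuousAt u c := hu.1.continuousOn.continuousAt (ball_mem_nhds c hR)
      have h2 : Tendsto (fun t : ℝ => c + t • x) (𝓝[>] 0) (𝓝 c) := by
        have : Continuous fun t : ℝ => c + t • x := by fun_prop
        simpa using (this.tendsto 0).mono_left nhdsWithin_le_nhds
      exact h1.tendsto.comp h2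
  have hlim2 : Tendsto f (𝓝[>] 0) (𝓝 (f r)) := by
    refine tendsto_const_nhds.congr' ?_
    filter_upwards [Ioo_mem_nhdsGT hR] with t ht
    exact (hconst t ht).symm
  have := tendsto_nhds_unique hlim2 hlim
  rw [integral_mul_const, mul_comm] at this
  exact this

/-- The strong minimum principle for a nonnegative harmonic function vanishing at the centre. -/
lemma HarmonicOnSet.eq_zero_of_nonneg {n : ℕ} {u : En n → ℝ} {c : En n} {R : ℝ}
    (hu : HarmonicOnSet u (ball c R)) (hpos : ∀ x ∈ ball c R, 0 ≤ u x) (hc : u c = 0) :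
    ∀ x ∈ ball c R, u x = 0 := by
  intro x hx
  obtain ⟨r, hr1, hr2⟩ := exists_between (mem_ball_iff_norm.1 hx)
  have hr0 : 0 < r := (norm_nonneg _).trans_lt hr1
  have h := hu.integral_capWeight_mul ⟨hr0, hr2⟩
  rw [hc, zero_mul] at h
  have := eq_zero_of_integral_capWeight_mul_eq_zero
    (hu.1.continuousOn.comp_homothety hr0.le hr2)
    (fun y hy => hpos _ (add_smul_mem_ball hr0.le hr2 hy)) h (r⁻¹ • (x - c)) (by
      rw [mem_ball_zero_iff, norm_smul, norm_inv, Real.norm_of_nonneg hr0.le]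
      rwa [inv_mul_lt_iff₀ hr0, mul_one])
  simpa [smul_smul, mul_inv_cancel₀ hr0.ne'] using this

lemma IsPreconnected.pos_or_neg_of_ne_zero {X : Type*} [TopologicalSpace X] {S : Set X}
    (hS : IsPreconnected S) {f : X → ℝ} (hf : ContinuousOn f S) (h : ∀ x ∈ S, f x ≠ 0) :
    (∀ x ∈ S, 0 < f x) ∨ (∀ x ∈ S, f x < 0) := by
  by_contra! hcon
  obtain ⟨⟨x, hx, hx0⟩, y, hy, hy0⟩ := hcon
  obtain ⟨z, hz, hz0⟩ := hS.intermediate_value hx hy hf ⟨hx0, hy0⟩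
  exact h z hz hz0

/-- Two harmonic functions with the same zeros have a product of constant sign near every
nonsingular point. -/
lemma HarmonicOnSet.eventually_mul_nonneg_or_nonpos {n : ℕ} {u v : En n → ℝ} {Ω : Set (En n)}
    (hΩ : IsOpen Ω) (hu : HarmonicOnSet u Ω) (hv : HarmonicOnSet v Ω)
    (hz : ∀ x ∈ Ω, u x = 0 ↔ v x = 0) {a : En n} (ha : a ∈ Ω)
    (hns : ¬(u a = 0 ∧ fderiv ℝ u a = 0)) :
    (∀ᶠ y in 𝓝 a, 0 ≤ u y * v y) ∨ (∀ᶠ y in 𝓝 a, u y * v y ≤ 0) := by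
  have huc := hu.1.continuousOn.continuousAt (hΩ.mem_nhds ha)
  have hvc := hv.1.continuousOn.continuousAt (hΩ.mem_nhds ha)
  by_cases hu0 : u a = 0
  swap
  · have h : u a * v a ≠ 0 := mul_ne_zero hu0 (fun h => hu0 ((hz a ha).2 h))
    rcases h.lt_or_gt with h | h
    · exact Or.inr (((huc.mul hvc).eventually_lt_const h).mono fun _ => le_of_lt)
    · exact Or.inl (((huc.mul hvc).eventually_const_lt h).mono fun _ => le_of_lt)
  have hd : fderiv ℝ u a ≠ 0 := fun h => hns ⟨hu0, h⟩
  have hv0 : v a = 0 := (hz a ha).1 hu0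
  have hnotzero : ¬ ∀ᶠ y in 𝓝 a, v y = 0 := by
    intro h
    have hev : u =ᶠ[𝓝 a] fun _ => (0 : ℝ) := by
      filter_upwards [h, hΩ.mem_nhds ha] with y hy hyΩ
      exact (hz y hyΩ).2 hy
    exact hd (by rw [hev.fderiv_eq]; simp)
  have hnosign : ∀ w : En n → ℝ, HarmonicOnSet w Ω → w a = 0 → (∀ᶠ y in 𝓝 a, 0 ≤ w y) →
      ∀ᶠ y in 𝓝 a, w y = 0 := by
    intro w hw hwa hpos
    obtain ⟨ε, hε, hball⟩ := Metric.eventually_nhds_iff_ball.1 (hpos.and (hΩ.mem_nhds ha))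
    filter_upwards [ball_mem_nhds a hε] with y hy
    exact (hw.mono fun x hx => (hball x hx).2).eq_zero_of_nonneg
      (fun x hx => (hball x hx).1) hwa y hy
  have hstrict : HasStrictFDerivAt u (fderiv ℝ u a) a :=
    ((hu.1.contDiffAt (hΩ.mem_nhds ha)).hasStrictFDerivAt two_ne_zero)
  have hrange : (fderiv ℝ u a).range = ⊤ := by
    rw [LinearMap.range_eq_top]
    exact LinearMap.surjective fun h => hd (ContinuousLinearMap.coe_injective h)
  set φ := hstrict.implicitToOpenPartialHomeomorph u _ hrange with hφ
  have hφa : a ∈ φ.source := hstrict.mem_implicitToOpenPartialHomeomorph_source hrange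
  have hfst : ∀ y, (φ y).1 = u y := fun y =>
    hstrict.implicitToOpenPartialHomeomorph_fst hrange y
  have hT : φ.symm ⁻¹' Ω ∩ φ.target ∈ 𝓝 (φ a) := by
    refine inter_mem ?_ (φ.open_target.mem_nhds (φ.map_source hφa))
    refine (φ.continuousAt_symm (φ.map_source hφa)).preimage_mem_nhds ?_
    rw [φ.left_inv hφa]
    exact hΩ.mem_nhds ha
  obtain ⟨ε, hε, hball⟩ := Metric.mem_nhds_iff.1 hT
  set W := ball (φ a) ε
  have hN : ∀ᶠ y in 𝓝 a, y ∈ Ω ∧ y ∈ φ.source ∧ φ y ∈ W :=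
    inter_mem (hΩ.mem_nhds ha) (inter_mem (φ.open_source.mem_nhds hφa)
      ((φ.continuousAt hφa).preimage_mem_nhds (ball_mem_nhds _ hε)))
  have hsign : ∀ H : Set (ℝ × (fderiv ℝ u a).ker), Convex ℝ H → (∀ p ∈ H, p.1 ≠ 0) →
      (∀ p ∈ W ∩ H, 0 < v (φ.symm p)) ∨ (∀ p ∈ W ∩ H, v (φ.symm p) < 0) := by
    intro H hH hH0
    refine ((convex_ball _ _).inter hH).isPreconnected.pos_or_neg_of_ne_zero
      (f := fun p => v (φ.symm p)) ?_ ?_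
    · exact hv.1.continuousOn.comp (φ.continuousOn_symm.mono fun p hp => (hball hp.1).2)
        fun p hp => (hball hp.1).1
    · intro p hp h0
      have h1 := (hz _ (hball hp.1).1).2 h0
      rw [← hfst, φ.right_inv (hball hp.1).2] at h1
      exact hH0 p hp.2 h1
  have hpos := hsign {p | 0 < p.1} (convex_halfSpace_gt (LinearMap.isLinear (LinearMap.fst ℝ ℝ _)) 0)
    fun p hp => ne_of_gt hp
  have hneg := hsign {p | p.1 < 0} (convex_halfSpace_lt (LinearMap.isLinear (LinearMap.fst ℝ ℝ _)) 0)
    fun p hp => ne_of_lt hp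
  have hcase : ∀ᶠ y in 𝓝 a, (u y = 0 ∧ v y = 0) ∨
      (0 < u y ∧ φ y ∈ W ∩ {p | 0 < p.1} ∧ φ.symm (φ y) = y) ∨
      (u y < 0 ∧ φ y ∈ W ∩ {p | p.1 < 0} ∧ φ.symm (φ y) = y) := by
    filter_upwards [hN] with y ⟨hyΩ, hys, hyW⟩
    rcases lt_trichotomy (u y) 0 with h | h | h
    · exact Or.inr (Or.inr ⟨h, ⟨hyW, by simpa [hfst] using h⟩, φ.left_inv hys⟩)
    · exact Or.inl ⟨h, (hz y hyΩ).1 h⟩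
    · exact Or.inr (Or.inl ⟨h, ⟨hyW, by simpa [hfst] using h⟩, φ.left_inv hys⟩)
  rcases hpos with hp | hp <;> rcases hneg with hm | hm
  · refine absurd (hnosign v hv hv0 ?_) hnotzero
    filter_upwards [hcase] with y hy
    rcases hy with h | ⟨-, h, e⟩ | ⟨-, h, e⟩
    · exact h.2.ge
    · exact e ▸ (hp _ h).le
    · exact e ▸ (hm _ h).le
  · left
    filter_upwards [hcase] with y hy
    rcases hy with h | ⟨h0, h, e⟩ | ⟨h0, h, e⟩
    · simp [h.1]
    · exact mul_nonneg h0.le (e ▸ (hp _ h).le)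
    · exact mul_nonneg_of_nonpos_of_nonpos h0.le (e ▸ (hm _ h).le)
  · right
    filter_upwards [hcase] with y hy
    rcases hy with h | ⟨h0, h, e⟩ | ⟨h0, h, e⟩
    · simp [h.1]
    · exact mul_nonpos_of_nonneg_of_nonpos h0.le (e ▸ (hp _ h).le)
    · exact mul_nonpos_of_nonpos_of_nonneg h0.le (e ▸ (hm _ h).le)
  · refine absurd ((hnosign (fun x => -v x) hv.neg (by simp [hv0]) ?_).mono
      fun y hy => by simpa using hy) hnotzero
    filter_upwards [hcase] with y hy
    rw [neg_nonneg]
    rcases hy with h | ⟨-, h, e⟩ | ⟨-, h, e⟩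
    · exact h.2.le
    · exact e ▸ (hp _ h).le
    · exact e ▸ (hm _ h).le

/-- Points near which `u v` is nonnegative form a set splitting off the singular zeros of `u`. -/
lemma HarmonicOnSet.splitsOffSingular {n : ℕ} {u v : En n → ℝ} {Ω : Set (En n)}
    (hΩ : IsOpen Ω) (hu : HarmonicOnSet u Ω) (hv : HarmonicOnSet v Ω)
    (hz : ∀ x ∈ Ω, u x = 0 ↔ v x = 0) :
    SplitsOffSingular u Ω {x | ∀ᶠ y in 𝓝 x, 0 ≤ u y * v y} := by
  intro x hx
  by_cases hns : u x = 0 ∧ fderiv ℝ u x = 0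
  · exact Or.inl hns
  right
  refine (hu.eventually_mul_nonneg_or_nonpos hΩ hv hz hx hns).imp
    eventually_eventually_nhds.2 fun h => ?_
  have hns' : ∀ᶠ y in 𝓝 x, ¬(u y = 0 ∧ fderiv ℝ u y = 0) := by
    rcases not_and_or.1 hns with h0 | h0
    · filter_upwards [(hu.1.continuousOn.continuousAt (hΩ.mem_nhds hx)).eventually_ne h0]
        with y hy using fun h => hy h.1
    · filter_upwards [((hu.1.continuousOn_fderiv_of_isOpen hΩ one_le_two).continuousAt
        (hΩ.mem_nhds hx)).eventually_ne h0] with y hy using fun h => hy h.2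
  filter_upwards [eventually_eventually_nhds.2 h, hns', hΩ.mem_nhds hx] with y hy hyns hyΩ hyA
  have hev : u =ᶠ[𝓝 y] fun _ => (0 : ℝ) := by
    filter_upwards [hy, hyA, hΩ.mem_nhds hyΩ] with z h1 h2 hzΩ
    rcases mul_eq_zero.1 (le_antisymm h1 h2) with h | h
    · exact h
    · exact (hz z hzΩ).2 h
  exact hyns ⟨hev.self_of_nhds, by rw [hev.fderiv_eq]; simp⟩

section Propagation

variable {n : ℕ} {A : Set (En n)} {u v : En n → ℝ}

lemma SplitsOffSingular.mono {Ω Ω' : Set (En n)} (h : SplitsOffSingular u Ω A) (hΩ : Ω' ⊆ Ω) :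
    SplitsOffSingular u Ω' A := fun x hx => h x (hΩ hx)

lemma SplitsOffSingular.continuousOn_indicator {Ω : Set (En n)} (hΩ : IsOpen Ω)
    (hu : HarmonicOnSet u Ω) (h : SplitsOffSingular u Ω A) : ContinuousOn (A.indicator u) Ω :=
  fun x hx => (hasFDerivAt_indicator (((hu.1.contDiffAt (hΩ.mem_nhds hx)).differentiableAt
    two_ne_zero).hasFDerivAt) (h x hx)).continuousAt.continuousWithinAt

lemma indicator_eq_zero_on_larger_ball (hA : MeasurableSet A) {c : En n} {R : ℝ}
    (hu : HarmonicOnSet u (ball c R)) (hv : HarmonicOnSet v (ball c R))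
    (h : SplitsOffSingular u (ball c R) A) (hpos : ∀ x ∈ ball c R, 0 ≤ A.indicator u x * v x)
    (hz : ∀ x ∈ ball c R, v x = 0 → A.indicator u x = 0) {s : ℝ} (hs : s ∈ Ioo 0 R)
    (h0 : ∀ x ∈ ball c s, A.indicator u x = 0) :
    ∃ r, s < r ∧ r ≤ R ∧ ∀ x ∈ ball c r, A.indicator u x = 0 := by
  obtain ⟨hs0, hsR⟩ := hs
  obtain ⟨R', h1, h2⟩ := exists_between hsR
  set r := √(s * R') with hr
  have hR'0 := hs0.trans h1
  have hrr : r * r = s * R' := Real.mul_self_sqrt (by positivity)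
  have hr0 : 0 < r := Real.sqrt_pos.2 (by positivity)
  have hsr : s < r := Real.lt_sqrt_of_sq_lt (by nlinarith)
  have hrR : r < R := by
    rw [hr, Real.sqrt_lt' (hs0.trans hsR)]
    nlinarith
  refine ⟨r, hsr, hrR.le, fun x hx => ?_⟩
  have key := hu.integral_pairing_eq hA hv h ⟨hr0, hrR⟩ ⟨hr0, hrR⟩ ⟨hs0, hsR⟩ ⟨hR'0, h2⟩ hrr
  have hzero : ∀ x : En n, capWeight x * (A.indicator u (c + s • x) * v (c + R' • x)) = 0 := by
    intro x
    by_cases hx : ‖x‖ < 1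
    · rw [h0, zero_mul, mul_zero]
      rw [mem_ball_iff_norm, add_sub_cancel_left, norm_smul, Real.norm_of_nonneg hs0.le]
      nlinarith
    · rw [capWeight_eq_zero (not_lt.1 hx), zero_mul]
  simp only [hzero, integral_zero] at key
  have hc := h.continuousOn_indicator isOpen_ball hu
  have := eq_zero_of_integral_capWeight_mul_eq_zero
    (f := fun x => A.indicator u (c + r • x) * v (c + r • x))
    ((hc.comp_homothety hr0.le hrR).mul (hv.1.continuousOn.comp_homothety hr0.le hrR))
    (fun y hy => hpos _ (add_smul_mem_ball hr0.le hrR hy)) key (r⁻¹ • (x - c)) (by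
      rw [mem_ball_zero_iff, norm_smul, norm_inv, Real.norm_of_nonneg hr0.le]
      rwa [inv_mul_lt_iff₀ hr0, mul_one, ← mem_ball_iff_norm])
  rw [smul_smul, mul_inv_cancel₀ hr0.ne', one_smul, add_sub_cancel] at this
  rcases mul_eq_zero.1 this with h | h
  · exact h
  · exact hz x (ball_subset_ball hrR.le hx) h

lemma indicator_eq_zero_on_ball (hA : MeasurableSet A) {c : En n} {R : ℝ}
    (hu : HarmonicOnSet u (ball c R)) (hv : HarmonicOnSet v (ball c R))
    (h : SplitsOffSingular u (ball c R) A) (hpos : ∀ x ∈ ball c R, 0 ≤ A.indicator u x * v x)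
    (hz : ∀ x ∈ ball c R, v x = 0 → A.indicator u x = 0)
    (h0 : ∀ᶠ x in 𝓝 c, A.indicator u x = 0) : ∀ x ∈ ball c R, A.indicator u x = 0 := by
  rcases le_or_gt R 0 with hR | hR
  · simp [ball_eq_empty.2 hR]
  set S : Set ℝ := {s | s ≤ R ∧ ∀ x ∈ ball c s, A.indicator u x = 0} with hS
  have hbdd : BddAbove S := ⟨R, fun s hs => hs.1⟩
  obtain ⟨ε, hε, hball⟩ := Metric.eventually_nhds_iff_ball.1 h0
  have hmem : min ε R ∈ S :=
    ⟨min_le_right _ _, fun x hx => hball x (ball_subset_ball (min_le_left _ _) hx)⟩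
  have hσ0 : 0 < sSup S := (lt_min hε hR).trans_le (le_csSup hbdd hmem)
  have hσR : sSup S ≤ R := csSup_le ⟨_, hmem⟩ fun s hs => hs.1
  have hσ : ∀ x ∈ ball c (sSup S), A.indicator u x = 0 := by
    intro x hx
    obtain ⟨s, hs, hxs⟩ := exists_lt_of_lt_csSup ⟨_, hmem⟩ (mem_ball.1 hx)
    exact hs.2 x hxs
  rcases hσR.eq_or_lt with hσR | hσR
  · rwa [hσR] at hσ
  · obtain ⟨r, hr1, hr2, hr3⟩ := indicator_eq_zero_on_larger_ball hA hu hv h hpos hz ⟨hσ0, hσR⟩ hσ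
    exact absurd (le_csSup hbdd ⟨hr2, hr3⟩) hr1.not_ge

lemma indicator_eq_zero_of_isPreconnected (hA : MeasurableSet A) {Ω : Set (En n)}
    (hΩ : IsOpen Ω) (hconn : IsPreconnected Ω)
    (hu : HarmonicOnSet u Ω) (hv : HarmonicOnSet v Ω)
    (h : SplitsOffSingular u Ω A) (hpos : ∀ x ∈ Ω, 0 ≤ A.indicator u x * v x)
    (hz : ∀ x ∈ Ω, v x = 0 → A.indicator u x = 0) {a : En n} (ha : a ∈ Ω)
    (h0 : ∀ᶠ x in 𝓝 a, A.indicator u x = 0) : ∀ x ∈ Ω, A.indicator u x = 0 := by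
  have hsub := hconn.subset_of_closure_inter_subset
    (isOpen_setOfPred_eventually_nhds (p := fun x => A.indicator u x = 0)) ⟨a, ha, h0⟩ ?_
  · exact fun x hx => (hsub hx).self_of_nhds
  · rintro x ⟨hx, hxΩ⟩
    obtain ⟨ε, hε, hball⟩ := Metric.isOpen_iff.1 hΩ x hxΩ
    obtain ⟨c, hc, hxc⟩ := Metric.mem_closure_iff.1 hx (ε / 2) (half_pos hε)
    have hsub : ball c (ε / 2) ⊆ Ω := by
      refine (ball_subset_ball' ?_).trans hball
      rw [dist_comm]
      linarith
    have := indicator_eq_zero_on_ball hA (hu.mono hsub) (hv.mono hsub) (h.mono hsub)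
      (fun x hx => hpos x (hsub hx)) (fun x hx => hz x (hsub hx)) hc
    exact Filter.mem_of_superset (isOpen_ball.mem_nhds hxc) this

end Propagation

/-- Unique continuation for harmonic functions. -/
lemma HarmonicOnSet.eq_zero_of_eventually_eq_zero {n : ℕ} {v : En n → ℝ} {Ω : Set (En n)}
    (hΩ : IsOpen Ω) (hconn : IsPreconnected Ω) (hv : HarmonicOnSet v Ω) {a : En n} (ha : a ∈ Ω)
    (h0 : ∀ᶠ x in 𝓝 a, v x = 0) : ∀ x ∈ Ω, v x = 0 := by
  have := indicator_eq_zero_of_isPreconnected MeasurableSet.univ hΩ hconn hv hv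
    (splitsOffSingular_univ v Ω) (fun x _ => by simpa using mul_self_nonneg (v x))
    (fun x _ h => by simpa using h) ha (by simpa using h0)
  simpa using this

/-- Harmonic functions with the same zero set have a product of constant sign. -/
lemma HarmonicOnSet.mul_nonneg_or_nonpos {n : ℕ} {u v : En n → ℝ} {Ω : Set (En n)}
    (hΩ : IsOpen Ω) (hconn : IsPreconnected Ω) (hu : HarmonicOnSet u Ω) (hv : HarmonicOnSet v Ω)
    (hz : ∀ x ∈ Ω, u x = 0 ↔ v x = 0) :
    (∀ x ∈ Ω, 0 ≤ u x * v x) ∨ (∀ x ∈ Ω, u x * v x ≤ 0) := by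
  by_contra! hcon
  obtain ⟨⟨a, ha, ha0⟩, b, hb, hb0⟩ := hcon
  have hcont : ∀ x ∈ Ω, ContinuousAt (fun y => u y * v y) x := fun x hx =>
    (hu.1.continuousOn.mul hv.1.continuousOn).continuousAt (hΩ.mem_nhds hx)
  set A : Set (En n) := {x | ∀ᶠ y in 𝓝 x, 0 ≤ u y * v y} with hA
  have hAm : MeasurableSet A := isOpen_setOfPred_eventually_nhds.measurableSet
  have := indicator_eq_zero_of_isPreconnected hAm hΩ hconn hu hv
    (hu.splitsOffSingular hΩ hv hz) (fun x hx => ?_) (fun x hx h => ?_) ha ?_ b hb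
  · have hbA : b ∈ A := ((hcont b hb).eventually_const_lt hb0).mono fun _ => le_of_lt
    rw [Set.indicator_of_mem hbA] at this
    simp [this] at hb0
  · by_cases hxA : x ∈ A
    · rw [Set.indicator_of_mem hxA]
      exact hxA.self_of_nhds
    · rw [Set.indicator_of_notMem hxA, zero_mul]
  · by_cases hxA : x ∈ A
    · rw [Set.indicator_of_mem hxA, (hz x hx).2 h]
    · rw [Set.indicator_of_notMem hxA]
  · filter_upwards [(hcont a ha).eventually_lt_const ha0] with y hy
    exact Set.indicator_of_notMem (fun h => hy.not_ge h.self_of_nhds) _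

lemma integral_comp_add_smul {n : ℕ} (f : En n → ℝ) (c : En n) {r : ℝ} (hr : 0 < r) :
    r ^ n * ∫ x, f (c + r • x) = ∫ x, f x := by
  have h := Measure.integral_comp_smul (volume : Measure (En n)) (fun x => f (c + x)) r
  rw [h, integral_add_left_eq_self f c, finrank_euclideanSpace_fin, abs_of_pos (by positivity),
    smul_eq_mul, mul_inv_cancel_left₀ (by positivity)]

lemma pow_mul_integral_capWeight_mul_le {n : ℕ} {g : En n → ℝ} {c : En n} {R r : ℝ}
    (hg : ContinuousOn g (ball c R)) (hpos : ∀ x ∈ ball c R, 0 ≤ g x) (hr : r ∈ Ioo 0 R) :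
    r ^ n * ∫ x, capWeight x * g (c + r • x) ≤ ∫ x in ball c r, g x := by
  obtain ⟨hr0, hrR⟩ := hr
  have h := integral_comp_add_smul (fun z => capWeight (r⁻¹ • (z - c)) * g z) c hr0
  simp only [add_sub_cancel_left, smul_smul, inv_mul_cancel₀ hr0.ne', one_smul] at h
  rw [h, ← integral_indicator isOpen_ball.measurableSet]
  have hout : ∀ z ∉ ball c r, capWeight (r⁻¹ • (z - c)) = 0 := by
    intro z hz
    refine capWeight_eq_zero ?_
    rw [norm_smul, norm_inv, Real.norm_of_nonneg hr0.le, le_inv_mul_iff₀ hr0, mul_one]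
    rw [mem_ball_iff_norm, not_lt] at hz
    exact hz
  refine integral_mono_of_nonneg (Eventually.of_forall fun z => ?_) ?_
    (Eventually.of_forall fun z => ?_)
  · by_cases hz : z ∈ ball c r
    · exact mul_nonneg (capWeight_nonneg _) (hpos z (ball_subset_ball hrR.le hz))
    · simp [hout z hz]
  · rw [integrable_indicator_iff isOpen_ball.measurableSet]
    exact ((hg.mono (closedBall_subset_ball hrR)).integrableOn_compact
      (isCompact_closedBall c r)).mono_set ball_subset_closedBall
  · by_cases hz : z ∈ ball c r
    · rw [Set.indicator_of_mem hz]
      exact mul_le_of_le_one_left (hpos z (ball_subset_ball hrR.le hz)) (capWeight_le_one _)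
    · simp [hout z hz, hz]

lemma sq_integral_capWeight_mul_le {n : ℕ} {f g : En n → ℝ}
    (hf : ContinuousOn f (closedBall 0 1)) (hg : ContinuousOn g (closedBall 0 1)) :
    (∫ x, capWeight x * (f x * g x)) ^ 2
      ≤ (∫ x, capWeight x * f x ^ 2) * ∫ x, capWeight x * g x ^ 2 := by
  have hff : Integrable fun x => capWeight x * f x ^ 2 := integrable_capWeight_mul (hf.pow 2)
  have hgg : Integrable fun x => capWeight x * g x ^ 2 := integrable_capWeight_mul (hg.pow 2)
  have hfg : Integrable fun x => capWeight x * (f x * g x) := integrable_capWeight_mul (hf.mul hg)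
  have h : ∀ t : ℝ, 0 ≤ (∫ x, capWeight x * g x ^ 2) * (t * t)
      + (2 * ∫ x, capWeight x * (f x * g x)) * t + ∫ x, capWeight x * f x ^ 2 := by
    intro t
    have h0 : 0 ≤ ∫ x, capWeight x * (f x + t * g x) ^ 2 :=
      integral_nonneg fun x => mul_nonneg (capWeight_nonneg x) (sq_nonneg _)
    have h1 : ∀ x, capWeight x * (f x + t * g x) ^ 2 = (t * t) * (capWeight x * g x ^ 2)
        + (2 * t) * (capWeight x * (f x * g x)) + capWeight x * f x ^ 2 := fun x => by ring
    simp only [h1] at h0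
    have hsum : Integrable fun x => (t * t) * (capWeight x * g x ^ 2)
        + (2 * t) * (capWeight x * (f x * g x)) := (hgg.const_mul _).add (hfg.const_mul _)
    rw [integral_add hsum hff,
      integral_add (hgg.const_mul _) (hfg.const_mul _), integral_const_mul,
      integral_const_mul] at h0
    linarith
  have := discrim_le_zero h
  rw [discrim] at this
  nlinarith

section LowerBound

variable {n : ℕ} {v : En n → ℝ}

/-- The weighted `L²` means of a harmonic function are logarithmically convex. -/
lemma HarmonicOnSet.sq_integral_sq_le {c : En n} {R r : ℝ} (hv : HarmonicOnSet v (ball c R))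
    (hr : r ∈ Ioo 0 R) :
    (∫ x, capWeight x * v (c + (r * (1 / 2)) • x) ^ 2) ^ 2
      ≤ (∫ x, capWeight x * v (c + r • x) ^ 2)
        * ∫ x, capWeight x * v (c + (r * (1 / 2) * (1 / 2)) • x) ^ 2 := by
  obtain ⟨h0, h1⟩ := hr
  have hm2 : r * (1 / 2) ∈ Ioo 0 R := ⟨by linarith, by linarith⟩
  have hm4 : r * (1 / 2) * (1 / 2) ∈ Ioo 0 R := ⟨by linarith, by linarith⟩
  have key := hv.integral_pairing_eq MeasurableSet.univ hv (splitsOffSingular_univ v _)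
    hm2 hm2 ⟨h0, h1⟩ hm4 (by ring)
  simp only [indicator_univ, ← sq] at key
  rw [key]
  exact sq_integral_capWeight_mul_le (hv.1.continuousOn.comp_homothety h0.le h1)
    (hv.1.continuousOn.comp_homothety hm4.1.le hm4.2)

lemma HarmonicOnSet.integral_sq_pos {c : En n} {R r : ℝ} (hv : HarmonicOnSet v (ball c R))
    (hr : r ∈ Ioo 0 R) (hnz : ¬∀ᶠ x in 𝓝 c, v x = 0) :
    0 < ∫ x, capWeight x * v (c + r • x) ^ 2 := by
  obtain ⟨hr0, hrR⟩ := hr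
  refine (integral_nonneg fun x => mul_nonneg (capWeight_nonneg x) (sq_nonneg _)).lt_of_ne'
    fun h => hnz ?_
  have := eq_zero_of_integral_capWeight_mul_eq_zero
    ((hv.1.continuousOn.comp_homothety hr0.le hrR).pow 2) (fun x _ => sq_nonneg _) h
  filter_upwards [ball_mem_nhds c hr0] with x hx
  have := this (r⁻¹ • (x - c)) (by
    rw [mem_ball_zero_iff, norm_smul, norm_inv, Real.norm_of_nonneg hr0.le]
    rwa [inv_mul_lt_iff₀ hr0, mul_one, ← mem_ball_iff_norm])
  simpa [smul_smul, mul_inv_cancel₀ hr0.ne'] using this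

lemma continuousOn_integral_capWeight_mul {g : En n → ℝ} {c : En n} {R T r : ℝ}
    (hg : ContinuousOn g (ball c R)) (hr : 0 < r) (hTR : T + r < R) :
    ContinuousOn (fun x => ∫ y, capWeight y * g (x + r • y)) (closedBall c T) := by
  obtain ⟨M, hM⟩ := (isCompact_closedBall c (T + r)).exists_bound_of_continuousOn
    (hg.mono (closedBall_subset_ball hTR))
  have hmem : ∀ x ∈ closedBall c T, ∀ y ∈ closedBall (0 : En n) 1,
      x + r • y ∈ closedBall c (T + r) := by
    intro x hx y hy
    rw [mem_closedBall_iff_norm] at hx ⊢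
    rw [mem_closedBall_zero_iff] at hy
    calc ‖x + r • y - c‖ = ‖(x - c) + r • y‖ := by congr 1; abel
      _ ≤ ‖x - c‖ + ‖r • y‖ := norm_add_le _ _
      _ ≤ T + r := by
        rw [norm_smul, Real.norm_of_nonneg hr.le]
        nlinarith
  refine continuousOn_of_dominated (bound := fun y => capWeight y * M) ?_ ?_
    (integrable_capWeight.mul_const M) ?_
  · intro x hx
    refine (integrable_capWeight_mul (f := fun y => g (x + r • y)) ?_).aestronglyMeasurable
    exact hg.comp (by fun_prop) fun y hy => closedBall_subset_ball hTR (hmem x hx y hy)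
  · refine fun x hx => Eventually.of_forall fun y => ?_
    by_cases hy : y ∈ closedBall (0 : En n) 1
    · rw [norm_mul, Real.norm_of_nonneg (capWeight_nonneg y)]
      exact mul_le_mul_of_nonneg_left (hM _ (hmem x hx y hy)) (capWeight_nonneg y)
    · simp [capWeight_eq_zero_of_notMem hy]
  · refine Eventually.of_forall fun y => ?_
    by_cases hy : y ∈ closedBall (0 : En n) 1
    · exact continuousOn_const.mul (hg.comp (by fun_prop)
        fun x hx => closedBall_subset_ball hTR (hmem x hx y hy))
    · simp [capWeight_eq_zero_of_notMem hy, continuousOn_const]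

/-- A harmonic function vanishes to at most finite order, uniformly on compact balls. -/
lemma HarmonicOnSet.exists_pow_le_integral_abs {c : En n} {R T : ℝ}
    (hv : HarmonicOnSet v (ball c R)) (hnz : ∀ x ∈ ball c R, ¬∀ᶠ y in 𝓝 x, v y = 0)
    (hT : 0 ≤ T) (hTR : T < R) :
    ∃ δ > 0, ∃ b > 0, ∃ K : ℕ, T + δ < R ∧ ∀ x ∈ closedBall c T, ∀ s ∈ Ioc 0 δ,
      b * s ^ K ≤ ∫ y in ball x s, |v y| := by
  set δ := (R - T) / 2 with hδ
  have hδ0 : 0 < δ := by linarith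
  have hsub : ∀ x ∈ closedBall c T, ball x (2 * δ) ⊆ ball c R := by
    intro x hx
    refine ball_subset_ball' ?_
    rw [mem_closedBall] at hx
    linarith
  have hvx : ∀ x ∈ closedBall c T, HarmonicOnSet v (ball x (2 * δ)) := fun x hx =>
    hv.mono (hsub x hx)
  set H : En n → ℝ → ℝ := fun x r => ∫ y, capWeight y * v (x + r • y) ^ 2 with hH
  have hHpos : ∀ x ∈ closedBall c T, ∀ r ∈ Ioo 0 (2 * δ), 0 < H x r := fun x hx r hr =>
    (hvx x hx).integral_sq_pos hr (hnz x (closedBall_subset_ball hTR hx))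
  have hHc : ∀ r ∈ Ioc 0 δ, ContinuousOn (fun x => H x r) (closedBall c T) := fun r hr =>
    continuousOn_integral_capWeight_mul (hv.1.continuousOn.pow 2) hr.1 (by linarith [hr.2])
  have hne : (closedBall c T).Nonempty := nonempty_closedBall.2 hT
  have hI1 : δ ∈ Ioc 0 δ := ⟨hδ0, le_rfl⟩
  have hI2 : δ * (1 / 2) ∈ Ioc 0 δ := ⟨by linarith, by linarith⟩
  have hsmall : ∀ j : ℕ, δ * (1 / 2) ^ j ∈ Ioo 0 (2 * δ) := fun j =>
    ⟨by positivity, by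
      have := pow_le_one₀ (n := j) (by norm_num : (0 : ℝ) ≤ 1 / 2) (by norm_num)
      nlinarith⟩
  obtain ⟨x₀, hx₀, hmin₀⟩ := (isCompact_closedBall c T).exists_isMinOn hne (hHc δ hI1)
  obtain ⟨x₁, hx₁, hmin₁⟩ := (isCompact_closedBall c T).exists_isMinOn hne
    ((hHc _ hI2).div (hHc δ hI1) fun x hx => (hHpos x hx δ ⟨hδ0, by linarith⟩).ne')
  set h₀ := H x₀ δ
  have hh₀ : 0 < h₀ := hHpos x₀ hx₀ δ ⟨hδ0, by linarith⟩
  set q := H x₁ (δ * (1 / 2)) / H x₁ δ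
  have hq : 0 < q := div_pos (hHpos x₁ hx₁ _ ⟨by linarith, by linarith⟩)
    (hHpos x₁ hx₁ _ ⟨by linarith, by linarith⟩)
  have hratio : ∀ x ∈ closedBall c T, ∀ j : ℕ,
      q * H x (δ * (1 / 2) ^ j) ≤ H x (δ * (1 / 2) ^ (j + 1)) := by
    intro x hx j
    induction j with
    | zero =>
      have h1 : q ≤ H x (δ * (1 / 2)) / H x δ := hmin₁ hx
      rw [le_div_iff₀ (hHpos x hx δ ⟨hδ0, by linarith⟩)] at h1
      simpa using h1
    | succ j ih =>
      have h1 := (hvx x hx).sq_integral_sq_le (hsmall j)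
      simp only [mul_assoc, ← pow_succ] at h1
      have p0 := hHpos x hx _ (hsmall j)
      have p1 := hHpos x hx _ (hsmall (j + 1))
      have h2 : H x (δ * (1 / 2) ^ (j + 1)) ^ 2
          ≤ H x (δ * (1 / 2) ^ j) * H x (δ * (1 / 2) ^ (j + 1 + 1)) := h1
      refine le_of_mul_le_mul_left (le_trans ?_ h2) p0
      nlinarith
  have hlow : ∀ x ∈ closedBall c T, ∀ j : ℕ, h₀ * q ^ j ≤ H x (δ * (1 / 2) ^ j) := by
    intro x hx j
    induction j with
    | zero => simpa using hmin₀ hx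
    | succ j ih =>
      refine le_trans ?_ (hratio x hx j)
      rw [pow_succ]
      nlinarith
  obtain ⟨M, hM⟩ := (isCompact_closedBall c (T + δ)).exists_bound_of_continuousOn
    (hv.1.continuousOn.mono (closedBall_subset_ball (by linarith)))
  obtain ⟨K, hK⟩ := exists_pow_lt_of_lt_one hq (by norm_num : (1 / 2 : ℝ) < 1)
  set M' := |M| + 1
  have hM' : 0 < M' := by positivity
  have hJ : ∀ x ∈ closedBall c T, ∀ r ∈ Ioc 0 δ,
      H x r ≤ M' * ∫ y, capWeight y * |v (x + r • y)| := by
    intro x hx r hr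
    have hr2 : r < 2 * δ := by linarith [hr.2]
    rw [← integral_const_mul]
    refine integral_mono (integrable_capWeight_mul
      (((hvx x hx).1.continuousOn.comp_homothety hr.1.le hr2).pow 2))
      ((integrable_capWeight_mul
      (((hvx x hx).1.continuousOn.comp_homothety hr.1.le hr2).abs)).const_mul _) fun y => ?_
    by_cases hy : y ∈ closedBall (0 : En n) 1
    · have hmem : x + r • y ∈ closedBall c (T + δ) := by
        rw [mem_closedBall_iff_norm] at hx ⊢
        rw [mem_closedBall_zero_iff] at hy
        calc ‖x + r • y - c‖ = ‖(x - c) + r • y‖ := by congr 1; abel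
          _ ≤ ‖x - c‖ + ‖r • y‖ := norm_add_le _ _
          _ ≤ T + δ := by
            rw [norm_smul, Real.norm_of_nonneg hr.1.le]
            nlinarith [hr.1, hr.2]
      have h1 : |v (x + r • y)| ≤ M' :=
        (hM _ hmem).trans ((le_abs_self M).trans (le_add_of_nonneg_right zero_le_one))
      have h2 : v (x + r • y) ^ 2 ≤ M' * |v (x + r • y)| := by
        rw [← sq_abs, sq]
        exact mul_le_mul_of_nonneg_right h1 (abs_nonneg _)
      have h3 := mul_le_mul_of_nonneg_left h2 (capWeight_nonneg y)
      simp only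
      linarith
    · simp [capWeight_eq_zero_of_notMem hy]
  refine ⟨δ, hδ0, h₀ / M' / (2 ^ n * (2 * δ) ^ K), by positivity, n + K, by linarith,
    fun x hx s hs => ?_⟩
  obtain ⟨j, hj1, hj2⟩ := exists_nat_pow_near_of_lt_one (div_pos hs.1 hδ0)
    ((div_le_one hδ0).2 hs.2) (by norm_num : (0 : ℝ) < 1 / 2) (by norm_num)
  set r := δ * (1 / 2) ^ (j + 1) with hr
  have hrs : r < s := by
    rw [lt_div_iff₀ hδ0] at hj1
    linarith
  have hsr : s / 2 ≤ r := by
    rw [div_le_iff₀ hδ0] at hj2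
    rw [hr, pow_succ]
    linarith
  have hr0 : 0 < r := (half_pos hs.1).trans_le hsr
  have hrI : r ∈ Ioc 0 δ := ⟨hr0, hrs.le.trans hs.2⟩
  have hb := pow_mul_integral_capWeight_mul_le (g := fun y => |v y|)
    (hvx x hx).1.continuousOn.abs (fun y _ => abs_nonneg _) ⟨hr0, by linarith [hrI.2]⟩
  have hmono : ∫ y in ball x r, |v y| ≤ ∫ y in ball x s, |v y| := by
    refine setIntegral_mono_set ?_ (Eventually.of_forall fun y => abs_nonneg _)
      (ball_subset_ball hrs.le).eventuallyLE
    exact (((hvx x hx).1.continuousOn.abs.mono (closedBall_subset_ball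
      (by linarith [hs.2]))).integrableOn_compact (isCompact_closedBall x s)).mono_set
      ball_subset_closedBall
  refine le_trans ?_ (hb.trans hmono)
  have hJr := hJ x hx r hrI
  have hqj : ((1 / 2 : ℝ) ^ (j + 1)) ^ K ≤ q ^ (j + 1) := by
    rw [← pow_mul, mul_comm, pow_mul]
    exact pow_le_pow_left₀ (by positivity) hK.le _
  have hsj : s / (2 * δ) ≤ (1 / 2) ^ (j + 1) := by
    rw [div_le_iff₀ (by positivity)]
    nlinarith
  have e1 : (s / (2 * δ)) ^ K ≤ q ^ (j + 1) :=
    (pow_le_pow_left₀ (div_nonneg hs.1.le (by positivity)) hsj K).trans hqj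
  have e2 : (s / 2) ^ n ≤ r ^ n := pow_le_pow_left₀ (half_pos hs.1).le hsr n
  have e3 : h₀ / M' * (s / (2 * δ)) ^ K ≤ ∫ y, capWeight y * |v (x + r • y)| := by
    rw [div_mul_eq_mul_div, div_le_iff₀ hM', mul_comm _ M']
    exact (mul_le_mul_of_nonneg_left e1 hh₀.le).trans ((hlow x hx (j + 1)).trans hJr)
  calc h₀ / M' / (2 ^ n * (2 * δ) ^ K) * s ^ (n + K)
      = (s / 2) ^ n * (h₀ / M' * (s / (2 * δ)) ^ K) := by
        rw [div_pow, div_pow, pow_add]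
        field_simp
    _ ≤ r ^ n * ∫ y, capWeight y * |v (x + r • y)| :=
        mul_le_mul e2 e3 (mul_nonneg (by positivity) (pow_nonneg (div_nonneg hs.1.le
          (by positivity)) _)) (by positivity)

end LowerBound

section MeanValue

variable {n : ℕ} {u v : En n → ℝ}

/-- The mean value property at `x + r a`, written as an integral around `x`. -/
lemma HarmonicOnSet.integral_capWeight_sub_mul {x a : En n} {R r : ℝ}
    (hu : HarmonicOnSet u (ball x R)) (hr : 0 < r) (hrR : 2 * r < R) (ha : ‖a‖ ≤ 1) :
    Integrable (fun z => capWeight (z - a) * u (x + r • z)) ∧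
      ∫ z, capWeight (z - a) * u (x + r • z) = u (x + r • a) * ∫ z : En n, capWeight z := by
  have hsub : ball (x + r • a) (R - r) ⊆ ball x R := by
    refine ball_subset_ball' ?_
    rw [dist_eq_norm, add_sub_cancel_left, norm_smul, Real.norm_of_nonneg hr.le]
    nlinarith
  have huy := hu.mono hsub
  have hI : r ∈ Ioo 0 (R - r) := ⟨hr, by linarith⟩
  have h1 := huy.integral_capWeight_mul hI
  have h2 := integrable_capWeight_mul (huy.1.continuousOn.comp_homothety hI.1.le hI.2)
  have heq : (fun z => capWeight (z - a) * u (x + r • z))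
      = fun z => (fun w => capWeight w * u (x + r • a + r • w)) (z - a) := by
    funext z
    have : x + r • a + r • (z - a) = x + r • z := by
      rw [smul_sub]; abel
    simp only [this]
  rw [heq]
  refine ⟨h2.comp_sub_right a, ?_⟩
  rw [integral_sub_right_eq_self (fun w => capWeight w * u (x + r • a + r • w)) a, h1]

lemma abs_capWeight_sub_sub_le (z a : En n) (hz : ‖z‖ ≤ 2) (ha : ‖a‖ ≤ 1) :
    |capWeight (z - a) - capWeight z| ≤ 5 * ‖a‖ := by
  refine (abs_max_sub_max_le_abs _ _ _).trans ?_
  have h1 : |‖z - a‖ - ‖z‖| ≤ ‖a‖ := by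
    simpa using abs_norm_sub_norm_le (z - a) z
  have h2 : ‖z - a‖ ≤ ‖z‖ + ‖a‖ := norm_sub_le _ _
  have h3 : 1 - ‖z - a‖ ^ 2 - (1 - ‖z‖ ^ 2) = -((‖z - a‖ - ‖z‖) * (‖z - a‖ + ‖z‖)) := by ring
  rw [h3, abs_neg, abs_mul, abs_of_nonneg (by positivity : 0 ≤ ‖z - a‖ + ‖z‖)]
  nlinarith [norm_nonneg a, norm_nonneg z, norm_nonneg (z - a)]

/-- A bounded harmonic function is Lipschitz near the centre of the ball. -/
lemma exists_abs_sub_le_of_harmonicOnSet (n : ℕ) :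
    ∃ L > 0, ∀ (u : En n → ℝ) (x : En n) (d M κ : ℝ), HarmonicOnSet u (ball x d) → 0 < d → (∀ y ∈ ball x d, |u y| ≤ M) → κ ∈ Icc 0 (1 / 4) →
    ∀ y ∈ closedBall x (κ * d), |u y - u x| ≤ L * κ * M := by
  set Ψ := ∫ z : En n, capWeight z with hΨ
  have hΨ0 : 0 < Ψ := integral_capWeight_pos
  set V := volume.real (closedBall (0 : En n) 2) with hV
  refine ⟨20 * (V + 1) / Ψ, by positivity, fun u x d M κ hu hd hM hκ y hy => ?_⟩
  have hM0 : 0 ≤ M := (abs_nonneg _).trans (hM x (mem_ball_self hd))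
  set r := d / 4 with hr
  have hr0 : 0 < r := by positivity
  set a : En n := r⁻¹ • (y - x) with ha
  have hay : x + r • a = y := by
    rw [ha, smul_smul, mul_inv_cancel₀ hr0.ne', one_smul, add_sub_cancel]
  have hnorm : ‖a‖ ≤ 4 * κ := by
    rw [ha, norm_smul, norm_inv, Real.norm_of_nonneg hr0.le, inv_mul_le_iff₀ hr0]
    rw [mem_closedBall_iff_norm] at hy
    exact hy.trans_eq (by rw [hr]; ring)
  have ha1 : ‖a‖ ≤ 1 := by linarith [hκ.2]
  obtain ⟨i1, e1⟩ := hu.integral_capWeight_sub_mul hr0 (by linarith) ha1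
  obtain ⟨i0, e0⟩ := hu.integral_capWeight_sub_mul (a := 0) hr0 (by linarith) (by simp)
  rw [hay] at e1
  simp only [smul_zero, add_zero] at e0
  have hint : Integrable ((closedBall (0 : En n) 2).indicator fun _ => 5 * ‖a‖ * M) := by
    rw [integrable_indicator_iff isClosed_closedBall.measurableSet]
    exact continuousOn_const.integrableOn_compact (isCompact_closedBall _ _)
  have hle := norm_integral_le_of_norm_le
    (f := fun z => capWeight (z - a) * u (x + r • z) - capWeight (z - 0) * u (x + r • z))
    hint (Eventually.of_forall fun z => ?_)
  · rw [integral_sub i1 i0, e1, e0, integral_indicator isClosed_closedBall.measurableSet,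
      setIntegral_const, ← sub_mul, norm_mul, Real.norm_of_nonneg hΨ0.le, ← hV, smul_eq_mul,
      Real.norm_eq_abs, ← le_div_iff₀ hΨ0] at hle
    refine hle.trans ?_
    rw [div_mul_eq_mul_div, div_mul_eq_mul_div]
    refine div_le_div_of_nonneg_right ?_ hΨ0.le
    have hV0 : 0 ≤ V := measureReal_nonneg
    have h1 : ‖a‖ * M ≤ 4 * κ * M := mul_le_mul_of_nonneg_right hnorm hM0
    have h2 : 0 ≤ κ * M := mul_nonneg hκ.1 hM0
    nlinarith
  · simp only [sub_zero, ← sub_mul, norm_mul, Real.norm_eq_abs]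
    by_cases hz : z ∈ closedBall (0 : En n) 2
    · rw [Set.indicator_of_mem hz]
      rw [mem_closedBall_zero_iff] at hz
      refine mul_le_mul (abs_capWeight_sub_sub_le z a hz ha1) (hM _ ?_) (abs_nonneg _)
        (by positivity)
      rw [mem_ball_iff_norm, add_sub_cancel_left, norm_smul, Real.norm_of_nonneg hr0.le]
      nlinarith
    · rw [Set.indicator_of_notMem hz]
      rw [mem_closedBall_zero_iff, not_le] at hz
      have h2 : 1 ≤ ‖z - a‖ := by linarith [norm_sub_norm_le z a]
      rw [capWeight_eq_zero h2, capWeight_eq_zero (by linarith : 1 ≤ ‖z‖)]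
      simp

/-- A Harnack inequality. -/
lemma HarmonicOnSet.le_of_nonneg {x : En n} {R r : ℝ} (hu : HarmonicOnSet u (ball x R))
    (hpos : ∀ y ∈ ball x R, 0 ≤ u y) (hr : 0 < r) (hrR : 4 * r < R) :
    ∀ y ∈ closedBall x r, u y ≤ 4 / 3 * 4 ^ n * u x := by
  intro y hy
  have hΨ0 : 0 < ∫ z : En n, capWeight z := integral_capWeight_pos
  set a : En n := r⁻¹ • (y - x) with ha
  have hay : x + r • a = y := by
    rw [ha, smul_smul, mul_inv_cancel₀ hr.ne', one_smul, add_sub_cancel]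
  have ha1 : ‖a‖ ≤ 1 := by
    rw [ha, norm_smul, norm_inv, Real.norm_of_nonneg hr.le, inv_mul_le_iff₀ hr, mul_one]
    rwa [mem_closedBall_iff_norm] at hy
  obtain ⟨i1, e1⟩ := hu.integral_capWeight_sub_mul hr (by linarith) ha1
  rw [hay] at e1
  have hI : 4 * r ∈ Ioo 0 R := ⟨by linarith, hrR⟩
  have e2 := hu.integral_capWeight_mul hI
  have i2 := integrable_capWeight_mul (hu.1.continuousOn.comp_homothety hI.1.le hI.2)
  set G : En n → ℝ := fun z => capWeight ((1 / 4 : ℝ) • z) * u (x + r • z) with hG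
  have hG4 : (fun z => capWeight z * u (x + (4 * r) • z)) = fun z => G ((4 : ℝ) • z) := by
    funext z
    simp only [hG, smul_smul]
    norm_num [mul_comm]
  have i3 : Integrable G := by
    rw [hG4] at i2
    exact (integrable_comp_smul_iff volume G (by norm_num : (4 : ℝ) ≠ 0)).1 i2
  have e3 := integral_comp_add_smul G 0 (by norm_num : (0 : ℝ) < 4)
  simp only [zero_add] at e3
  rw [← hG4, e2] at e3
  have hmono := integral_mono i1 (i3.const_mul (4 / 3)) fun z => ?_
  · rw [e1, integral_const_mul, ← e3] at hmono
    refine le_of_mul_le_mul_right (hmono.trans_eq ?_) hΨ0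
    ring
  · simp only [hG]
    rcases le_or_gt 2 ‖z‖ with hz | hz
    · have h2 : 1 ≤ ‖z - a‖ := by linarith [norm_sub_norm_le z a]
      rw [capWeight_eq_zero h2, zero_mul]
      rcases le_or_gt 4 ‖z‖ with hz4 | hz4
      · rw [capWeight_eq_zero (by rw [norm_smul]; norm_num; linarith)]
        simp
      · have : 0 ≤ u (x + r • z) := hpos _ (by
          rw [mem_ball_iff_norm, add_sub_cancel_left, norm_smul, Real.norm_of_nonneg hr.le]
          nlinarith)
        have := capWeight_nonneg ((1 / 4 : ℝ) • z)
        positivity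
    · have h0 : 0 ≤ u (x + r • z) := hpos _ (by
        rw [mem_ball_iff_norm, add_sub_cancel_left, norm_smul, Real.norm_of_nonneg hr.le]
        nlinarith)
      have h1 : 3 / 4 ≤ capWeight ((1 / 4 : ℝ) • z) := by
        refine le_max_of_le_left ?_
        rw [norm_smul]
        norm_num
        nlinarith [norm_nonneg z]
      have h2 := capWeight_le_one (z - a)
      rw [← mul_assoc]
      exact mul_le_mul_of_nonneg_right (by linarith) h0

end MeanValue

section Comparison

variable {n : ℕ} {v : En n → ℝ}

/-- Interior bounds for harmonic functions in the weighted space `L¹(|v|)`. -/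
lemma HarmonicOnSet.exists_abs_le_integral_abs_mul_abs {c : En n} {R T T' : ℝ}
    (hv : HarmonicOnSet v (ball c R)) (hnz : ∀ x ∈ ball c R, ¬∀ᶠ y in 𝓝 x, v y = 0)
    (hT' : 0 ≤ T') (hT'T : T' < T) (hTR : T < R) :
    ∃ C > 0, ∀ u : En n → ℝ, HarmonicOnSet u (ball c R) → ∀ y ∈ closedBall c T',
      |u y| ≤ C * ∫ z in ball c T, |u z| * |v z| := by
  have hT0 : 0 < T := hT'.trans_lt hT'T
  obtain ⟨δ, hδ0, b, hb0, K, -, hlow⟩ := hv.exists_pow_le_integral_abs hnz hT0.le hTR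
  obtain ⟨L, hL0, hosc⟩ := exists_abs_sub_le_of_harmonicOnSet n
  set m := K + 1 with hm
  set κ := min (min (1 / 4) (1 / (2 * L * 2 ^ m))) (δ / T) with hκ
  have hκ0 : 0 < κ := by positivity
  have hκ1 : κ ≤ 1 / 4 := (min_le_left _ _).trans (min_le_left _ _)
  have hκ2 : κ ≤ 1 / (2 * L * 2 ^ m) := (min_le_left _ _).trans (min_le_right _ _)
  have hκ3 : κ ≤ δ / T := min_le_right _ _
  have hTT : 0 < T - T' := by linarith
  refine ⟨2 ^ (m + 1) / (b / δ * κ ^ m) / (T - T') ^ m, by positivity, fun u hu y hy => ?_⟩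
  have huc : ContinuousOn u (closedBall c T) :=
    hu.1.continuousOn.mono (closedBall_subset_ball hTR)
  have hvc : ContinuousOn v (closedBall c T) :=
    hv.1.continuousOn.mono (closedBall_subset_ball hTR)
  set F : En n → ℝ := fun x => (T - dist x c) ^ m * |u x| with hF
  have hFc : ContinuousOn F (closedBall c T) :=
    (by fun_prop : Continuous fun x => (T - dist x c) ^ m).continuousOn.mul huc.abs
  obtain ⟨p, hp, hmax⟩ := (isCompact_closedBall c T).exists_isMaxOn
    (nonempty_closedBall.2 hT0.le) hFc
  have huv : IntegrableOn (fun z => |u z| * |v z|) (ball c T) :=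
    ((huc.abs.mul hvc.abs).integrableOn_compact (isCompact_closedBall c T)).mono_set
      ball_subset_closedBall
  have hI0 : 0 ≤ ∫ z in ball c T, |u z| * |v z| :=
    integral_nonneg fun z => mul_nonneg (abs_nonneg _) (abs_nonneg _)
  have hFp : F p ≤ 2 ^ (m + 1) / (b / δ * κ ^ m) * ∫ z in ball c T, |u z| * |v z| := by
    rcases (mem_closedBall.1 hp).eq_or_lt with hpc | hpc
    · have : F p = 0 := by simp [hF, hpc, hm]
      rw [this]
      positivity
    set d := (T - dist p c) / 2 with hd
    have hd0 : 0 < d := by linarith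
    have hdT : d ≤ T := by linarith [dist_nonneg (x := p) (y := c)]
    have hsub : ball p d ⊆ ball c T := ball_subset_ball' (by linarith)
    have hbound : ∀ z ∈ ball p d, |u z| ≤ 2 ^ m * |u p| := by
      intro z hz
      have h1 : F z ≤ F p := hmax (ball_subset_closedBall (hsub hz))
      have h2 : d ≤ T - dist z c := by
        have := dist_triangle z p c
        rw [mem_ball] at hz
        linarith
      have h3 : d ^ m * |u z| ≤ F z :=
        mul_le_mul_of_nonneg_right (pow_le_pow_left₀ hd0.le h2 m) (abs_nonneg _)
      have h4 : F p = d ^ m * (2 ^ m * |u p|) := by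
        simp only [hF]
        rw [show T - dist p c = d * 2 by rw [hd]; ring, mul_pow]
        ring
      rw [h4] at h1
      exact le_of_mul_le_mul_left (h3.trans h1) (by positivity)
    have hhalf : ∀ z ∈ ball p (κ * d), |u p| / 2 ≤ |u z| := by
      intro z hz
      have h1 := hosc u p d _ κ (hu.mono (hsub.trans (ball_subset_ball hTR.le))) hd0 hbound
        ⟨hκ0.le, hκ1⟩ z (ball_subset_closedBall hz)
      have h2 : L * κ * (2 ^ m * |u p|) ≤ |u p| / 2 := by
        rw [le_div_iff₀ (by positivity)] at hκ2
        nlinarith [abs_nonneg (u p)]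
      have h3 := abs_sub_abs_le_abs_sub (u p) (u z)
      rw [abs_sub_comm] at h3
      linarith
    have hs : κ * d ∈ Ioc 0 δ := by
      refine ⟨by positivity, ?_⟩
      rw [le_div_iff₀ hT0] at hκ3
      nlinarith
    have h1 := hlow p hp _ hs
    have hsub2 : ball p (κ * d) ⊆ ball c T :=
      (ball_subset_ball (by nlinarith)).trans hsub
    have h2 : ∫ z in ball p (κ * d), |u p| / 2 * |v z| ≤ ∫ z in ball c T, |u z| * |v z| := by
      refine le_trans ?_ (setIntegral_mono_set huv
        (Eventually.of_forall fun z => mul_nonneg (abs_nonneg _) (abs_nonneg _))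
        hsub2.eventuallyLE)
      refine setIntegral_mono_on ?_ (huv.mono_set hsub2) isOpen_ball.measurableSet
        fun z hz => mul_le_mul_of_nonneg_right (hhalf z hz) (abs_nonneg _)
      exact ((hvc.abs.integrableOn_compact (isCompact_closedBall c T)).mono_set
        (hsub2.trans ball_subset_closedBall)).const_mul _
    rw [integral_const_mul] at h2
    have h3 : b / δ * (κ * d) ^ m ≤ b * (κ * d) ^ K := by
      rw [hm, pow_succ, div_mul_eq_mul_div, div_le_iff₀ hδ0, mul_assoc]
      exact mul_le_mul_of_nonneg_left
        (mul_le_mul_of_nonneg_left hs.2 (by positivity)) hb0.le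
    have h4 : |u p| / 2 * (b / δ * (κ * d) ^ m) ≤ ∫ z in ball c T, |u z| * |v z| :=
      (mul_le_mul_of_nonneg_left (h3.trans h1) (by positivity)).trans h2
    rw [div_mul_eq_mul_div, le_div_iff₀ (by positivity)]
    calc F p * (b / δ * κ ^ m) = 2 ^ (m + 1) * (|u p| / 2 * (b / δ * (κ * d) ^ m)) := by
          simp only [hF]
          rw [show T - dist p c = d * 2 by rw [hd]; ring, mul_pow, mul_pow, pow_succ]
          ring
      _ ≤ _ := mul_le_mul_of_nonneg_left h4 (by positivity)
  have hFy : (T - T') ^ m * |u y| ≤ F y := by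
    refine mul_le_mul_of_nonneg_right (pow_le_pow_left₀ hTT.le ?_ m) (abs_nonneg _)
    linarith [mem_closedBall.1 hy]
  rw [div_mul_eq_mul_div, le_div_iff₀ (by positivity), mul_comm]
  exact hFy.trans ((hmax (closedBall_subset_closedBall hT'T.le hy)).trans hFp)

lemma setIntegral_le_integral_capWeight_mul {g : En n → ℝ} {c : En n} {R T r : ℝ}
    (hg : ContinuousOn g (ball c R)) (hpos : ∀ x ∈ ball c R, 0 ≤ g x) (hT : 0 ≤ T) (hTr : T < r)
    (hrR : r < R) :
    ∫ x in ball c T, g x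
      ≤ (1 - (T / r) ^ 2)⁻¹ * (r ^ n * ∫ x, capWeight x * g (c + r • x)) := by
  have hr0 : 0 < r := hT.trans_lt hTr
  have h := integral_comp_add_smul (fun z => capWeight (r⁻¹ • (z - c)) * g z) c hr0
  simp only [add_sub_cancel_left, smul_smul, inv_mul_cancel₀ hr0.ne', one_smul] at h
  have hint := integrable_capWeight_mul (hg.comp_homothety hr0.le hrR)
  have hint' : Integrable fun z => capWeight (r⁻¹ • (z - c)) * g z := by
    have h1 := (hint.comp_smul (inv_ne_zero hr0.ne')).comp_sub_right c
    refine h1.congr (Eventually.of_forall fun z => ?_)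
    simp [smul_smul, mul_inv_cancel₀ hr0.ne']
  have hq : (T / r) ^ 2 < 1 := by
    rw [div_pow, div_lt_one (by positivity)]
    nlinarith
  have hq0 : 0 < 1 - (T / r) ^ 2 := by linarith
  rw [h, ← integral_const_mul, ← integral_indicator isOpen_ball.measurableSet]
  have hTR : ball c T ⊆ ball c R := ball_subset_ball (by linarith)
  refine integral_mono_of_nonneg (Eventually.of_forall fun z => ?_) (hint'.const_mul _)
    (Eventually.of_forall fun z => ?_)
  · exact Set.indicator_nonneg (fun z hz => hpos z (hTR hz)) z
  · by_cases hz : z ∈ ball c T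
    · rw [Set.indicator_of_mem hz]
      have hgz := hpos z (hTR hz)
      rw [le_inv_mul_iff₀ hq0]
      refine mul_le_mul_of_nonneg_right (le_max_of_le_left ?_) hgz
      rw [norm_smul, norm_inv, Real.norm_of_nonneg hr0.le, inv_mul_eq_div]
      have : ‖z - c‖ / r ≤ T / r :=
        div_le_div_of_nonneg_right (mem_ball_iff_norm.1 hz).le hr0.le
      have h0 : 0 ≤ ‖z - c‖ / r := by positivity
      nlinarith
    · rw [Set.indicator_of_notMem hz]
      refine mul_nonneg (inv_nonneg.2 hq0.le) ?_
      by_cases hzr : z ∈ ball c r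
      · exact mul_nonneg (capWeight_nonneg _) (hpos z (ball_subset_ball hrR.le hzr))
      · rw [capWeight_eq_zero, zero_mul]
        rw [norm_smul, norm_inv, Real.norm_of_nonneg hr0.le, le_inv_mul_iff₀ hr0, mul_one]
        rw [mem_ball_iff_norm, not_lt] at hzr
        exact hzr

/-- Three-ball comparison: harmonic functions sharing the sign pattern of `v` are controlled on a
larger ball by their size on a smaller one. -/
lemma HarmonicOnSet.exists_bound_of_lt_sqrt {c : En n} {R ρ T' : ℝ}
    (hv : HarmonicOnSet v (ball c R)) (hnz : ∀ x ∈ ball c R, ¬∀ᶠ y in 𝓝 x, v y = 0)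
    (hρ : ρ ∈ Ioo 0 R) (hT' : 0 ≤ T') (hT'R : T' < √(ρ * R)) :
    ∃ C : ℝ, ∀ u : En n → ℝ, HarmonicOnSet u (ball c R) →
      ((∀ x ∈ ball c R, 0 ≤ u x * v x) ∨ ∀ x ∈ ball c R, u x * v x ≤ 0) →
      ∀ M : ℝ, (∀ x ∈ closedBall c ρ, |u x| ≤ M) → ∀ x ∈ closedBall c T', |u x| ≤ C * M := by
  obtain ⟨hρ0, hρR⟩ := hρ
  have hT'2 : T' ^ 2 / ρ < R := by
    rw [Real.lt_sqrt hT'] at hT'R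
    rw [div_lt_iff₀ hρ0]
    linarith
  obtain ⟨R', hR'1, hR'R⟩ := exists_between (max_lt hT'2 hρR)
  obtain ⟨h1, hρR'⟩ := max_lt_iff.1 hR'1
  have hR'0 : 0 < R' := hρ0.trans hρR'
  rw [div_lt_iff₀ hρ0] at h1
  set r := √(ρ * R') with hr
  have hrr : r * r = ρ * R' := Real.mul_self_sqrt (by positivity)
  have hr0 : 0 < r := Real.sqrt_pos.2 (by positivity)
  have hT'r : T' < r := Real.lt_sqrt_of_sq_lt (by linarith)
  have hrR : r < R := by
    rw [hr, Real.sqrt_lt' (hρ0.trans hρR)]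
    nlinarith
  obtain ⟨T, hT'T, hTr⟩ := exists_between hT'r
  have hT0 : 0 < T := hT'.trans_lt hT'T
  obtain ⟨C, hC0, hC⟩ := hv.exists_abs_le_integral_abs_mul_abs hnz hT' hT'T (hTr.trans hrR)
  obtain ⟨Mv, hMv⟩ := (isCompact_closedBall c R').exists_bound_of_continuousOn
    (hv.1.continuousOn.mono (closedBall_subset_ball hR'R))
  set Ψ := ∫ z : En n, capWeight z with hΨ
  set k := (1 - (T / r) ^ 2)⁻¹ with hk
  have hk0 : 0 ≤ k := by
    rw [hk, inv_nonneg, sub_nonneg, div_pow, div_le_one (by positivity)]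
    nlinarith
  refine ⟨C * (k * (r ^ n * (Mv * Ψ))), fun u hu hsign M hM x hx => ?_⟩
  have hM0 : 0 ≤ M := (abs_nonneg _).trans (hM c (mem_closedBall_self hρ0.le))
  have huc := hu.1.continuousOn
  have hvc := hv.1.continuousOn
  have e1 := hC u hu x hx
  have e2 := setIntegral_le_integral_capWeight_mul (g := fun z => |u z| * |v z|)
    (huc.abs.mul hvc.abs) (fun z _ => mul_nonneg (abs_nonneg _) (abs_nonneg _)) hT0.le hTr hrR
  have e3 : ∫ z, capWeight z * (|u (c + r • z)| * |v (c + r • z)|)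
      = |∫ z, capWeight z * (u (c + r • z) * v (c + r • z))| := by
    rcases hsign with hs | hs
    · have : ∀ z : En n, capWeight z * (|u (c + r • z)| * |v (c + r • z)|)
          = capWeight z * (u (c + r • z) * v (c + r • z)) := by
        intro z
        by_cases hz : z ∈ closedBall (0 : En n) 1
        · rw [← abs_mul, abs_of_nonneg (hs _ (add_smul_mem_ball hr0.le hrR hz))]
        · simp [capWeight_eq_zero_of_notMem hz]
      simp only [← this]
      rw [abs_of_nonneg (integral_nonneg fun z => mul_nonneg (capWeight_nonneg z)
        (mul_nonneg (abs_nonneg _) (abs_nonneg _)))]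
    · have : ∀ z : En n, capWeight z * (u (c + r • z) * v (c + r • z))
          = -(capWeight z * (|u (c + r • z)| * |v (c + r • z)|)) := by
        intro z
        by_cases hz : z ∈ closedBall (0 : En n) 1
        · rw [← abs_mul, abs_of_nonpos (hs _ (add_smul_mem_ball hr0.le hrR hz))]
          ring
        · simp [capWeight_eq_zero_of_notMem hz]
      simp only [this]
      rw [integral_neg, abs_neg, abs_of_nonneg (integral_nonneg fun z =>
        mul_nonneg (capWeight_nonneg z) (mul_nonneg (abs_nonneg _) (abs_nonneg _)))]
  have e4 := hu.integral_pairing_eq MeasurableSet.univ hv (splitsOffSingular_univ u _)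
    ⟨hr0, hrR⟩ ⟨hr0, hrR⟩ ⟨hρ0, hρR⟩ ⟨hR'0, hR'R⟩ hrr
  simp only [indicator_univ] at e4
  have hmem : ∀ t : ℝ, 0 < t → ∀ z ∈ closedBall (0 : En n) 1, c + t • z ∈ closedBall c t := by
    intro t ht z hz
    rw [mem_closedBall_zero_iff] at hz
    rw [mem_closedBall_iff_norm, add_sub_cancel_left, norm_smul, Real.norm_of_nonneg ht.le]
    nlinarith
  have e5 : |∫ z, capWeight z * (u (c + ρ • z) * v (c + R' • z))| ≤ Ψ * (M * Mv) := by
    rw [hΨ, ← integral_mul_const (M * Mv), ← Real.norm_eq_abs]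
    refine norm_integral_le_of_norm_le (integrable_capWeight.mul_const _)
      (Eventually.of_forall fun z => ?_)
    rw [norm_mul, norm_mul, Real.norm_of_nonneg (capWeight_nonneg z)]
    by_cases hz : z ∈ closedBall (0 : En n) 1
    · exact mul_le_mul_of_nonneg_left (mul_le_mul (hM _ (hmem ρ hρ0 z hz))
        (hMv _ (hmem R' hR'0 z hz)) (norm_nonneg _) hM0) (capWeight_nonneg z)
    · simp [capWeight_eq_zero_of_notMem hz]
  simp only [e3, e4] at e2
  calc |u x| ≤ C * ∫ z in ball c T, |u z| * |v z| := e1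
    _ ≤ C * (k * (r ^ n * (Ψ * (M * Mv)))) := by
        refine mul_le_mul_of_nonneg_left (e2.trans ?_) hC0.le
        gcongr
    _ = C * (k * (r ^ n * (Mv * Ψ))) * M := by ring

/-- Iterating the three-ball comparison. -/
lemma HarmonicOnSet.exists_bound {c : En n} {R ρ T' : ℝ}
    (hv : HarmonicOnSet v (ball c R)) (hnz : ∀ x ∈ ball c R, ¬∀ᶠ y in 𝓝 x, v y = 0)
    (hρ : ρ ∈ Ioo 0 R) (hT'R : T' < R) :
    ∃ C : ℝ, ∀ u : En n → ℝ, HarmonicOnSet u (ball c R) →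
      ((∀ x ∈ ball c R, 0 ≤ u x * v x) ∨ ∀ x ∈ ball c R, u x * v x ≤ 0) →
      ∀ M : ℝ, (∀ x ∈ closedBall c ρ, |u x| ≤ M) → ∀ x ∈ closedBall c T', |u x| ≤ C * M := by
  set S : Set ℝ := {t | t ∈ Ico ρ R ∧ ∃ C : ℝ, ∀ u : En n → ℝ, HarmonicOnSet u (ball c R) →
      ((∀ x ∈ ball c R, 0 ≤ u x * v x) ∨ ∀ x ∈ ball c R, u x * v x ≤ 0) →
      ∀ M : ℝ, (∀ x ∈ closedBall c ρ, |u x| ≤ M) → ∀ x ∈ closedBall c t, |u x| ≤ C * M} with hS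
  have hρS : ρ ∈ S := ⟨⟨le_rfl, hρ.2⟩, 1, fun u _ _ M hM x hx => by simpa using hM x hx⟩
  have hbdd : BddAbove S := ⟨R, fun t ht => ht.1.2.le⟩
  have hσρ : ρ ≤ sSup S := le_csSup hbdd hρS
  have hσ0 : 0 < sSup S := hρ.1.trans_le hσρ
  have hR0 : 0 < R := hρ.1.trans hρ.2
  have hσ : R ≤ sSup S := by
    by_contra! hlt
    have h1 : sSup S ^ 2 / R < sSup S := by
      rw [div_lt_iff₀ hR0]
      nlinarith
    obtain ⟨t, ht, hσt⟩ := exists_lt_of_lt_csSup ⟨ρ, hρS⟩ h1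
    rw [div_lt_iff₀ hR0] at hσt
    have ht0 : 0 < t := hρ.1.trans_le ht.1.1
    have h2 : sSup S < √(t * R) := Real.lt_sqrt_of_sq_lt hσt
    obtain ⟨s, hs1, hs2⟩ := exists_between h2
    have hsR : s < R := by
      refine hs2.trans_le ((Real.sqrt_le_left hR0.le).2 ?_)
      nlinarith [ht.1.2]
    obtain ⟨C, hC⟩ := ht.2
    obtain ⟨C', hC'⟩ := hv.exists_bound_of_lt_sqrt hnz ⟨ht0, ht.1.2⟩ (hσ0.trans hs1).le hs2
    refine absurd (le_csSup hbdd (?_ : s ∈ S)) hs1.not_ge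
    refine ⟨⟨hσρ.trans hs1.le, hsR⟩, C' * C, fun u hu hsign M hM x hx => ?_⟩
    rw [mul_assoc]
    exact hC' u hu hsign _ (hC u hu hsign M hM) x hx
  obtain ⟨t, ht, hTt⟩ := exists_lt_of_lt_csSup ⟨ρ, hρS⟩ (hT'R.trans_le hσ)
  obtain ⟨C, hC⟩ := ht.2
  exact ⟨C, fun u hu hsign M hM x hx =>
    hC u hu hsign M hM x (closedBall_subset_closedBall hTt.le hx)⟩

end Comparison

theorem stmt16 (n : ℕ) (v : En n → ℝ)
    (hv : HarmonicOnSet v (ball 0 1))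
    (hne : ∃ x ∈ ball (0 : En n) 1, v x ≠ 0) :
    ∀ y₀ ∈ ball (0 : En n) (1/2) \ zeroSet v (ball 0 1),
      ∃ C₁ > (0 : ℝ),
        ∀ u : En n → ℝ, HarmonicOnSet u (ball 0 1) →
          zeroSet u (ball 0 1) = zeroSet v (ball 0 1) →
          ∀ x ∈ ball (0 : En n) (1/2), |u x| ≤ C₁ * |u y₀| := by
  rintro y₀ ⟨hy, hyZ⟩
  have hconn : IsPreconnected (ball (0 : En n) 1) := (convex_ball _ _).isPreconnected
  have hy1 : y₀ ∈ ball (0 : En n) 1 := ball_subset_ball (by norm_num) hy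
  have hvy : v y₀ ≠ 0 := fun h => hyZ ⟨hy1, h⟩
  have hnz : ∀ x ∈ ball (0 : En n) 1, ¬∀ᶠ y in 𝓝 x, v y = 0 := fun x hx h =>
    hvy (hv.eq_zero_of_eventually_eq_zero isOpen_ball hconn hx h y₀ hy1)
  have hynorm : ‖y₀‖ < 1 / 2 := mem_ball_zero_iff.1 hy
  have hsub1 : ball y₀ (1 / 2) ⊆ ball (0 : En n) 1 := by
    refine ball_subset_ball' ?_
    rw [dist_zero_right]
    linarith
  have hsub2 : ball (0 : En n) (3 / 4) ⊆ ball 0 1 := ball_subset_ball (by norm_num)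
  obtain ⟨ε, hε, hball⟩ := Metric.eventually_nhds_iff_ball.1
    ((hv.1.continuousOn.continuousAt (isOpen_ball.mem_nhds hy1)).eventually_ne hvy)
  set R₀ := min ε (1 / 2) with hR₀
  have hR₀0 : 0 < R₀ := by positivity
  have hsub0 : ball y₀ R₀ ⊆ ball 0 1 := (ball_subset_ball (min_le_right _ _)).trans hsub1
  set ρ := R₀ / 5 with hρ
  obtain ⟨T, hT1, hT2⟩ := exists_between hynorm
  have hρI : ρ ∈ Ioo 0 (1 / 2 : ℝ) := ⟨by positivity, by
    have : R₀ ≤ 1 / 2 := min_le_right _ _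
    linarith⟩
  obtain ⟨C, hC⟩ := (hv.mono hsub1).exists_bound (fun x hx => hnz x (hsub1 hx)) hρI hT2
  obtain ⟨C', hC'⟩ := (hv.mono hsub2).exists_bound (ρ := T - ‖y₀‖) (T' := 1 / 2)
    (fun x hx => hnz x (hsub2 hx)) ⟨by linarith, by linarith [norm_nonneg y₀]⟩ (by norm_num)
  refine ⟨max (C' * (C * (4 / 3 * 4 ^ n))) 1, by positivity, fun u hu hZ x hx => ?_⟩
  have hz : ∀ x ∈ ball (0 : En n) 1, u x = 0 ↔ v x = 0 := fun x hx => by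
    have := Set.ext_iff.1 hZ x
    simpa [zeroSet, mem_ball_zero_iff.1 hx] using this
  have hsign := hu.mul_nonneg_or_nonpos isOpen_ball hconn hv hz
  have hstart : ∀ x ∈ closedBall y₀ ρ, |u x| ≤ 4 / 3 * 4 ^ n * |u y₀| := by
    intro x hx
    have hx0 : x ∈ ball y₀ R₀ := closedBall_subset_ball (by linarith) hx
    have hu0 : HarmonicOnSet u (ball y₀ R₀) := hu.mono hsub0
    rcases (convex_ball y₀ R₀).isPreconnected.pos_or_neg_of_ne_zero hu0.1.continuousOn
      (fun z hz' h => hball z (ball_subset_ball (min_le_left _ _) hz')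
        ((hz z (hsub0 hz')).1 h)) with hp | hp
    · rw [abs_of_pos (hp x hx0), abs_of_pos (hp y₀ (mem_ball_self hR₀0))]
      exact hu0.le_of_nonneg (fun z hz' => (hp z hz').le) hρI.1 (by linarith) x hx
    · rw [abs_of_neg (hp x hx0), abs_of_neg (hp y₀ (mem_ball_self hR₀0))]
      exact hu0.neg.le_of_nonneg (fun z hz' => neg_nonneg.2 (hp z hz').le) hρI.1
        (by linarith) x hx
  have hmid := hC u (hu.mono hsub1) (hsign.imp (fun h z hz' => h z (hsub1 hz'))
    fun h z hz' => h z (hsub1 hz')) _ hstart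
  have hend := hC' u (hu.mono hsub2) (hsign.imp (fun h z hz' => h z (hsub2 hz'))
    fun h z hz' => h z (hsub2 hz')) _ (fun z hz' => hmid z (closedBall_subset_closedBall'
      (by rw [dist_zero_left]; linarith) hz')) x (ball_subset_closedBall hx)
  refine hend.trans ?_
  rw [← mul_assoc, ← mul_assoc]
  refine mul_le_mul_of_nonneg_right ?_ (abs_nonneg _)
  simpa only [mul_assoc] using le_max_left _ (1 : ℝ)
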